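/- Root multiplicities on the diagonal for the simplest rank-2 hyperbolic Kac–Moody algebra: in g(A) with A = [[2,−3],[−3,2]], the multiplicities of the roots (m,m) for m = 1,…,12 are mult(1,1) = 1, mult(2,2) = 1, mult(3,3) = 3, mult(4,4) = 6, mult(5,5) = 16, mult(6,6) = 39, mult(7,7) = 107, mult(8,8) = 288, mult(9,9) = 808, mult(10,10) = 2278, mult(11,11) = 6559, and mult(12,12) = 19022. -/

import Mathlib

noncomputable section

open CartanMatrix

/-- A generalized Cartan matrix: `A i i = 2`, off-diagonal entries are non-positive, and
`A i j = 0 ↔ A j i = 0`. -/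
def IsGCM {B : Type*} (A : Matrix B B ℤ) : Prop :=
  (∀ i, A i i = 2) ∧ (∀ i j, i ≠ j → A i j ≤ 0) ∧ (∀ i j, A i j = 0 ↔ A j i = 0)

/-- The images in the Kac–Moody algebra `Matrix.ToLieAlgebra ℚ A` of the generators of the
free Lie algebra. -/
def KMgen {B : Type*} [DecidableEq B] (A : Matrix B B ℤ) (x : Generators B) :
    Matrix.ToLieAlgebra ℚ A :=
  LieSubmodule.Quotient.mk (N := Relations.toIdeal ℚ A) (FreeLieAlgebra.of ℚ x)

/-- The Cartan generator `h i`. -/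
def gH {B : Type*} [DecidableEq B] (A : Matrix B B ℤ) (i : B) : Matrix.ToLieAlgebra ℚ A :=
  KMgen A (Generators.H i)

/-- The raising generator `e i`. -/
def gE {B : Type*} [DecidableEq B] (A : Matrix B B ℤ) (i : B) : Matrix.ToLieAlgebra ℚ A :=
  KMgen A (Generators.E i)

/-- The lowering generator `f i`. -/
def gF {B : Type*} [DecidableEq B] (A : Matrix B B ℤ) (i : B) : Matrix.ToLieAlgebra ℚ A :=
  KMgen A (Generators.F i)

/-- The root space of `g(A)` attached to `n : B → ℤ`: the simultaneous eigenspace of the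
adjoint action of the Cartan generators `h i`, with eigenvalues `∑ j, A i j * n j`. -/
def rootSpace {B : Type*} [Fintype B] [DecidableEq B] (A : Matrix B B ℤ) (n : B → ℤ) :
    Submodule ℚ (Matrix.ToLieAlgebra ℚ A) :=
  ⨅ i, Module.End.eigenspace
    (LieAlgebra.ad ℚ (Matrix.ToLieAlgebra ℚ A) (gH A i)) ((∑ j, A i j * n j : ℤ) : ℚ)

/-- The multiplicity of `n` in `g(A)`: the dimension of the root space. -/
def rootMult {B : Type*} [Fintype B] [DecidableEq B] (A : Matrix B B ℤ) (n : B → ℤ) : ℕ :=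
  Module.finrank ℚ (rootSpace A n)

/-- The Cartan matrix of the simplest rank-2 hyperbolic Kac–Moody algebra. -/
def A2hyp : Matrix (Fin 2) (Fin 2) ℤ := !![2, -3; -3, 2]

/-!
The positive part of `g(A)` is the Serre algebra `N`, generated by the `e i` subject to the Serre
relations alone. Indeed, `f i` and `h i` act on `U(N)` as they do on a Verma module, so `N` maps
injectively to `g(A)`, and the triangular decomposition leaves nothing else in positive weights.

On the exterior algebra of `N` let `∂` be the Chevalley–Eilenberg boundary, and let `d` extend the
cobracket of `N`. Kostant's Laplacian `∂ d + d ∂` acts on chains of weight `β` by a scalar, a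
multiple of `(β, β) / 2 - (ρ, β)`. Where it is nonzero, the Euler characteristic of the chains of
weight `β`, which is the coefficient of `e ^ β` in `∏ (1 - e ^ α) ^ mult α`, vanishes.

Up to `![12, 12]` only seven weights survive. The logarithmic derivative of the product is a
recursion between their coefficients and the sums of `height α * mult α` over `α` with `β ∈ ℕ α`.
It gives these sums at the other weights `β`. At the seven it gives the coefficients, since there
the sums reduce to smaller weights: `mult` vanishes at and beyond the end of the `e i`-string
through `e j`, that end itself excepted.
-/

section ExteriorOperators

open ExteriorAlgebra

variable {R : Type*} [CommRing R] {V : Type*} [AddCommGroup V] [Module R V]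

theorem exteriorAlgebra_induction {P : ExteriorAlgebra R V → Prop}
    (algebraMap : ∀ r : R, P (algebraMap _ _ r)) (add : ∀ u w, P u → P w → P (u + w))
    (ι_mul : ∀ v w, P w → P (ι R v * w)) (w : ExteriorAlgebra R V) : P w :=
  CliffordAlgebra.left_induction (Q := (0 : QuadraticForm R V)) algebraMap add
    (fun w v => ι_mul v w) w

theorem ι_mul_ι_mul_comm (x y : V) (w : ExteriorAlgebra R V) :
    ι R x * (ι R y * w) = -(ι R y * (ι R x * w)) := by
  rw [← mul_assoc, ← mul_assoc, eq_neg_of_add_eq_zero_left (ι_add_mul_swap x y), neg_mul]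

/-- The operator `T` on the exterior algebra determined by `T 1 = 0` and
`T (x ∧ w) = a x w + s • (x ∧ T w)`. For `s = 1` this is the shape of a derivation, for `s = -1`
that of an antiderivation or of a Chevalley–Eilenberg boundary. -/
def wedgeRec (s : R) (a : V →ₗ[R] ExteriorAlgebra R V →ₗ[R] ExteriorAlgebra R V)
    (ha : ∀ x w, a x (ι R x * w) + s • (ι R x * a x w) = 0) :
    ExteriorAlgebra R V →ₗ[R] ExteriorAlgebra R V :=
  CliffordAlgebra.foldr' (0 : QuadraticForm R V)
    (a.compl₂ (LinearMap.fst R _ _) +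
      s • ((LinearMap.mul R (ExteriorAlgebra R V)).comp (ι R)).compl₂ (LinearMap.snd R _ _))
    (fun x w u => by
      have h : s • (ι R x * s • (ι R x * u)) = 0 := by
        rw [mul_smul_comm, ← mul_assoc, ι_sq_zero, zero_mul, smul_zero, smul_zero]
      simpa [mul_add, smul_add, ← add_assoc, ha] using h) 0

section wedgeRec

variable {s : R} {a : V →ₗ[R] ExteriorAlgebra R V →ₗ[R] ExteriorAlgebra R V}
  {ha : ∀ x w, a x (ι R x * w) + s • (ι R x * a x w) = 0}

theorem wedgeRec_algebraMap (r : R) : wedgeRec s a ha (algebraMap _ _ r) = 0 :=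
  (CliffordAlgebra.foldr'_algebraMap _ _ _ _ _).trans (smul_zero r)

theorem wedgeRec_ι_mul (x : V) (w : ExteriorAlgebra R V) :
    wedgeRec s a ha (ι R x * w) = a x w + s • (ι R x * wedgeRec s a ha w) :=
  CliffordAlgebra.foldr'_ι_mul _ _ _ _ _ _

end wedgeRec

/-- The derivation of the exterior algebra extending a linear endomorphism of its generators. -/
def wedgeDer (f : V →ₗ[R] V) : ExteriorAlgebra R V →ₗ[R] ExteriorAlgebra R V :=
  wedgeRec 1 ((LinearMap.mul R _).comp (ι R ∘ₗ f)) fun x w => by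
    simp [ι_mul_ι_mul_comm (f x) x]

@[simp]
theorem wedgeDer_algebraMap (f : V →ₗ[R] V) (r : R) : wedgeDer f (algebraMap _ _ r) = 0 :=
  wedgeRec_algebraMap r

@[simp]
theorem wedgeDer_one (f : V →ₗ[R] V) : wedgeDer f 1 = 0 := by
  simpa using wedgeDer_algebraMap f 1

@[simp]
theorem wedgeDer_ι_mul (f : V →ₗ[R] V) (x : V) (w : ExteriorAlgebra R V) :
    wedgeDer f (ι R x * w) = ι R (f x) * w + ι R x * wedgeDer f w := by
  simp [wedgeDer, wedgeRec_ι_mul]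

@[simp]
theorem wedgeDer_ι (f : V →ₗ[R] V) (x : V) : wedgeDer f (ι R x) = ι R (f x) := by
  simpa using wedgeDer_ι_mul f x 1

theorem wedgeDer_mul (f : V →ₗ[R] V) (u w : ExteriorAlgebra R V) :
    wedgeDer f (u * w) = wedgeDer f u * w + u * wedgeDer f w := by
  induction u using exteriorAlgebra_induction with
  | algebraMap r => simp [← Algebra.smul_def]
  | add u v hu hv => simp only [add_mul, map_add, hu, hv]; abel
  | ι_mul v u hu => rw [mul_assoc, wedgeDer_ι_mul, hu, wedgeDer_ι_mul]; noncomm_ring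

theorem eq_wedgeDer (f : V →ₗ[R] V) {T : ExteriorAlgebra R V →ₗ[R] ExteriorAlgebra R V}
    (h_one : T 1 = 0) (h_mul : ∀ x w, T (ι R x * w) = ι R (f x) * w + ι R x * T w) :
    T = wedgeDer f := by
  refine LinearMap.ext fun w => ?_
  induction w using exteriorAlgebra_induction with
  | algebraMap r => rw [Algebra.algebraMap_eq_smul_one, map_smul, map_smul, h_one, wedgeDer_one]
  | add u v hu hv => rw [map_add, map_add, hu, hv]
  | ι_mul v w hw => rw [h_mul, hw, wedgeDer_ι_mul]

theorem wedgeDer_add (f g : V →ₗ[R] V) : wedgeDer (f + g) = wedgeDer f + wedgeDer g := by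
  refine (eq_wedgeDer _ (by simp) fun x w => ?_).symm
  simp only [LinearMap.add_apply, wedgeDer_ι_mul, map_add]
  noncomm_ring

theorem wedgeDer_smul (r : R) (f : V →ₗ[R] V) : wedgeDer (r • f) = r • wedgeDer f :=
  (eq_wedgeDer _ (by simp) fun x w => by simp [smul_add]).symm

theorem wedgeDer_commutator (f g : V →ₗ[R] V) :
    wedgeDer (f ∘ₗ g - g ∘ₗ f) = wedgeDer f ∘ₗ wedgeDer g - wedgeDer g ∘ₗ wedgeDer f := by
  refine (eq_wedgeDer _ (by simp) fun x w => ?_).symm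
  simp only [LinearMap.sub_apply, LinearMap.comp_apply, wedgeDer_ι_mul, map_add, map_sub]
  noncomm_ring

end ExteriorOperators

section ChevalleyEilenberg

open ExteriorAlgebra

variable {R L : Type*} [CommRing R] [LieRing L] [LieAlgebra R L]

instance exteriorAlgebraLieRingModule : LieRingModule L (ExteriorAlgebra R L) where
  bracket x w := wedgeDer (LieAlgebra.ad R L x) w
  add_lie x y w := by rw [map_add, wedgeDer_add, LinearMap.add_apply]
  lie_add x u w := map_add _ u w
  leibniz_lie x y w := by
    have h : (LieAlgebra.ad R L ⁅x, y⁆ : L →ₗ[R] L) = LieAlgebra.ad R L x ∘ₗ LieAlgebra.ad R L y -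
        LieAlgebra.ad R L y ∘ₗ LieAlgebra.ad R L x := by
      ext z; simp
    rw [h, wedgeDer_commutator]
    simp

instance exteriorAlgebraLieModule : LieModule R L (ExteriorAlgebra R L) where
  smul_lie r x w := by
    change wedgeDer (LieAlgebra.ad R L (r • x)) w = r • wedgeDer (LieAlgebra.ad R L x) w
    rw [map_smul, wedgeDer_smul, LinearMap.smul_apply]
  lie_smul r x w := map_smul (wedgeDer (LieAlgebra.ad R L x)) r w

theorem lie_exteriorAlgebra_eq (x : L) (w : ExteriorAlgebra R L) :
    ⁅x, w⁆ = wedgeDer (LieAlgebra.ad R L x) w :=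
  rfl

@[simp]
theorem lie_ι (x y : L) : ⁅x, ι R y⁆ = ι R ⁅x, y⁆ := by
  simp [lie_exteriorAlgebra_eq]

@[simp]
theorem lie_algebraMap_exteriorAlgebra (x : L) (r : R) :
    ⁅x, algebraMap R (ExteriorAlgebra R L) r⁆ = 0 := by
  simp [lie_exteriorAlgebra_eq]

@[simp]
theorem lie_one_exteriorAlgebra (x : L) : ⁅x, (1 : ExteriorAlgebra R L)⁆ = 0 :=
  wedgeDer_one _

-- `lie_smul` does not unify with the scalar action that `CliffordAlgebra` provides.
theorem lie_smul_exteriorAlgebra (x : L) (r : R) (w : ExteriorAlgebra R L) :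
    ⁅x, r • w⁆ = r • ⁅x, w⁆ :=
  map_smul (wedgeDer (LieAlgebra.ad R L x)) r w

theorem lie_mul_exteriorAlgebra (x : L) (u w : ExteriorAlgebra R L) :
    ⁅x, u * w⁆ = ⁅x, u⁆ * w + u * ⁅x, w⁆ :=
  wedgeDer_mul _ u w

variable (R L) in
/-- The Chevalley–Eilenberg boundary `∂` on the chains `⋀ L`, by the recursion
`∂ (x ∧ w) = x • w - x ∧ ∂ w`. -/
def ceBoundary : ExteriorAlgebra R L →ₗ[R] ExteriorAlgebra R L :=
  wedgeRec (-1) (LinearMap.mk₂ R Bracket.bracket add_lie smul_lie lie_add lie_smul) fun x w => by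
    simp [lie_mul_exteriorAlgebra]

local notation "∂" => ceBoundary R L

@[simp]
theorem ceBoundary_algebraMap (r : R) : ∂ (algebraMap _ _ r) = 0 :=
  wedgeRec_algebraMap r

@[simp]
theorem ceBoundary_one : ∂ 1 = 0 := by
  rw [← map_one (algebraMap R _), ceBoundary_algebraMap]

@[simp]
theorem ceBoundary_ι_mul (x : L) (w : ExteriorAlgebra R L) :
    ∂ (ι R x * w) = ⁅x, w⁆ - ι R x * ∂ w := by
  simp [ceBoundary, wedgeRec_ι_mul, sub_eq_add_neg]

@[simp]
theorem ceBoundary_ι (x : L) : ∂ (ι R x) = 0 := by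
  have h := ceBoundary_ι_mul x (1 : ExteriorAlgebra R L)
  rwa [ceBoundary_one, mul_one, lie_one_exteriorAlgebra, mul_zero, sub_zero] at h

theorem ceBoundary_lie (x : L) (w : ExteriorAlgebra R L) : ∂ ⁅x, w⁆ = ⁅x, ∂ w⁆ := by
  induction w using exteriorAlgebra_induction with
  | algebraMap r => simp
  | add u v hu hv => simp only [lie_add, map_add, hu, hv]
  | ι_mul y w ih =>
    simp only [lie_mul_exteriorAlgebra, lie_ι, map_add, ceBoundary_ι_mul, ih, lie_sub, lie_lie]
    abel

theorem wedgeDer_lie (D : LieDerivation R L L) (x : L) (w : ExteriorAlgebra R L) :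
    wedgeDer (D : L →ₗ[R] L) ⁅x, w⁆ = ⁅D x, w⁆ + ⁅x, wedgeDer (D : L →ₗ[R] L) w⁆ := by
  have h : (LieAlgebra.ad R L (D x) : L →ₗ[R] L) =
      (D : L →ₗ[R] L) ∘ₗ LieAlgebra.ad R L x - LieAlgebra.ad R L x ∘ₗ (D : L →ₗ[R] L) := by
    ext y
    simp
  rw [lie_exteriorAlgebra_eq (D x), h, wedgeDer_commutator]
  exact (sub_add_cancel _ _).symm

theorem ceBoundary_wedgeDer (D : LieDerivation R L L) (w : ExteriorAlgebra R L) :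
    ∂ (wedgeDer (D : L →ₗ[R] L) w) = wedgeDer (D : L →ₗ[R] L) (∂ w) := by
  induction w using exteriorAlgebra_induction with
  | algebraMap r => simp
  | add u v hu hv => simp only [map_add, hu, hv]
  | ι_mul x w ih =>
    simp only [wedgeDer_ι_mul, map_add, map_sub, ceBoundary_ι_mul, ih, wedgeDer_lie,
      LieDerivation.coeFn_coe]
    abel

theorem ι_mul_ι_mem {V : Type*} [AddCommGroup V] [Module R V] (x y : V) :
    ι R x * ι R y ∈ ⋀[R]^2 V := by
  rw [exteriorPower, pow_two]
  exact Submodule.mul_mem_mul ⟨x, rfl⟩ ⟨y, rfl⟩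

theorem exteriorPower_two_induction {V : Type*} [AddCommGroup V] [Module R V]
    {P : ∀ u : ExteriorAlgebra R V, u ∈ ⋀[R]^2 V → Prop}
    (ι_mul_ι : ∀ x y, P (ι R x * ι R y) (ι_mul_ι_mem x y))
    (add : ∀ u hu w hw, P u hu → P w hw → P (u + w) (add_mem hu hw))
    {u : ExteriorAlgebra R V} (hu : u ∈ ⋀[R]^2 V) : P u hu := by
  suffices h : ∃ hu, P u hu from h.2
  have hu' : u ∈ LinearMap.range (ι R (M := V)) * LinearMap.range (ι R) := by
    rwa [exteriorPower, pow_two] at hu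
  refine Submodule.mul_induction_on hu' ?_ fun u w ⟨hu, hPu⟩ ⟨hw, hPw⟩ =>
    ⟨add_mem hu hw, add u hu w hw hPu hPw⟩
  rintro _ ⟨x, rfl⟩ _ ⟨y, rfl⟩
  exact ⟨ι_mul_ι_mem x y, ι_mul_ι x y⟩

theorem mul_ι_mul_of_mem_exteriorPower_two {V : Type*} [AddCommGroup V] [Module R V] (x : V)
    {u : ExteriorAlgebra R V} (hu : u ∈ ⋀[R]^2 V) (w : ExteriorAlgebra R V) :
    u * (ι R x * w) = ι R x * (u * w) := by
  induction hu using exteriorPower_two_induction with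
  | ι_mul_ι y z =>
    simp only [mul_assoc, ι_mul_ι_mul_comm z x, ι_mul_ι_mul_comm y x, mul_neg, neg_neg]
  | add u _ v _ hu hv => simp only [add_mul, mul_add, hu, hv]

theorem lie_mem_exteriorPower_two (x : L) {u : ExteriorAlgebra R L} (hu : u ∈ ⋀[R]^2 L) :
    ⁅x, u⁆ ∈ ⋀[R]^2 L := by
  induction hu using exteriorPower_two_induction with
  | ι_mul_ι y z =>
    rw [lie_mul_exteriorAlgebra, lie_ι, lie_ι]
    exact add_mem (ι_mul_ι_mem _ _) (ι_mul_ι_mem _ _)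
  | add u _ v _ hu hv => rw [lie_add]; exact add_mem hu hv

/-- The operator `d` on `⋀ L` extending a map `δ : L → ⋀² L` by the recursion
`d (x ∧ w) = δ x ∧ w - x ∧ d w`. -/
def ceCodiff (δ : L →ₗ[R] ExteriorAlgebra R L) (hδ : ∀ x, δ x ∈ ⋀[R]^2 L) :
    ExteriorAlgebra R L →ₗ[R] ExteriorAlgebra R L :=
  wedgeRec (-1) ((LinearMap.mul R _).comp δ) fun x w => by
    simp [mul_ι_mul_of_mem_exteriorPower_two x (hδ x)]

section ceCodiff

variable {δ : L →ₗ[R] ExteriorAlgebra R L} {hδ : ∀ x, δ x ∈ ⋀[R]^2 L}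

local notation "d" => ceCodiff δ hδ

@[simp]
theorem ceCodiff_algebraMap (r : R) : d (algebraMap _ _ r) = 0 :=
  wedgeRec_algebraMap r

@[simp]
theorem ceCodiff_ι_mul (x : L) (w : ExteriorAlgebra R L) :
    d (ι R x * w) = δ x * w - ι R x * d w := by
  simp [ceCodiff, wedgeRec_ι_mul, sub_eq_add_neg]

/-- The failure of `∂` to be a derivation on the product of `u` and `w`. -/
def ceDefect (u w : ExteriorAlgebra R L) : ExteriorAlgebra R L :=
  ∂ (u * w) - ∂ u * w - u * ∂ w

-- `∂` has order two, so for even `u` its defect is an antiderivation in `w`.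
theorem ceDefect_ι_mul {u : ExteriorAlgebra R L} (hu : u ∈ ⋀[R]^2 L) (y : L)
    (w : ExteriorAlgebra R L) :
    ceDefect u (ι R y * w) = ⁅y, u⁆ * w - ι R y * ceDefect u w := by
  induction hu using exteriorPower_two_induction with
  | ι_mul_ι a b =>
    simp only [ceDefect, mul_assoc, ceBoundary_ι_mul, lie_mul_exteriorAlgebra, lie_ι,
      ceBoundary_ι, mul_zero, sub_zero, add_mul, mul_sub, mul_add]
    rw [← lie_skew y a, ← lie_skew y b, map_neg, map_neg, neg_mul, neg_mul, mul_neg,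
      ι_mul_ι_mul_comm y b, ι_mul_ι_mul_comm y a, ι_mul_ι_mul_comm y ⁅a, b⁆,
      ι_mul_ι_mul_comm y a, ι_mul_ι_mul_comm y b, ι_mul_ι_mul_comm ⁅a, y⁆ b]
    abel
  | add u _ v _ hu hv =>
    simp only [ceDefect, add_mul, map_add, mul_add, mul_sub, lie_add] at *
    linear_combination (norm := abel) hu + hv

/-- The Laplacian `∂ d + d ∂`. -/
def ceLaplacian (δ : L →ₗ[R] ExteriorAlgebra R L) (hδ : ∀ x, δ x ∈ ⋀[R]^2 L) :
    ExteriorAlgebra R L →ₗ[R] ExteriorAlgebra R L :=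
  ∂ ∘ₗ ceCodiff δ hδ + ceCodiff δ hδ ∘ₗ ∂

/-- The failure of the Laplacian to be a derivation on `x ∧ w`. -/
def laplacianDefect (δ : L →ₗ[R] ExteriorAlgebra R L) (hδ : ∀ x, δ x ∈ ⋀[R]^2 L) (x : L)
    (w : ExteriorAlgebra R L) : ExteriorAlgebra R L :=
  ceDefect (δ x) w + (ceCodiff δ hδ ⁅x, w⁆ - ⁅x, ceCodiff δ hδ w⁆)

theorem ceLaplacian_ι_mul (x : L) (w : ExteriorAlgebra R L) :
    ceLaplacian δ hδ (ι R x * w) =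
      ∂ (δ x) * w + ι R x * ceLaplacian δ hδ w + laplacianDefect δ hδ x w := by
  simp only [ceLaplacian, laplacianDefect, ceDefect, LinearMap.add_apply, LinearMap.comp_apply,
    ceCodiff_ι_mul, ceBoundary_ι_mul, map_sub]
  noncomm_ring

theorem laplacianDefect_ι_mul {c : L → L → ExteriorAlgebra R L}
    (hc : ∀ x y, δ ⁅x, y⁆ = ⁅x, δ y⁆ - ⁅y, δ x⁆ + c x y) (x y : L) (w : ExteriorAlgebra R L) :
    laplacianDefect δ hδ x (ι R y * w) = c x y * w - ι R y * laplacianDefect δ hδ x w := by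
  simp only [laplacianDefect, ceDefect_ι_mul (hδ x), lie_mul_exteriorAlgebra, lie_ι,
    ceCodiff_ι_mul, map_add, lie_sub, hc]
  noncomm_ring

theorem ceCodiff_wedgeDer {D : LieDerivation R L L}
    (hD : ∀ x, δ (D x) = wedgeDer (D : L →ₗ[R] L) (δ x)) (w : ExteriorAlgebra R L) :
    d (wedgeDer (D : L →ₗ[R] L) w) = wedgeDer (D : L →ₗ[R] L) (d w) := by
  induction w using exteriorAlgebra_induction with
  | algebraMap r => simp
  | add u v hu hv => simp only [map_add, hu, hv]
  | ι_mul x w ih =>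
    rw [wedgeDer_ι_mul, map_add, ceCodiff_ι_mul, ceCodiff_ι_mul, ih, LieDerivation.coeFn_coe, hD,
      ceCodiff_ι_mul, map_sub, wedgeDer_mul, wedgeDer_ι_mul, LieDerivation.coeFn_coe]
    abel

end ceCodiff

section Torus

variable {I : Type*} [Fintype I] (D : I → LieDerivation R L L) (B : Matrix I I R)

/-- The bilinear map `(x, y) ↦ ∑ B i j • D i x ∧ D j y`; it is a 2-cocycle when `B` is
symmetric. -/
def torusForm : L →ₗ[R] L →ₗ[R] ExteriorAlgebra R L :=
  ∑ i, ∑ j, B i j •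
    (LinearMap.mul R _).compl₁₂ (ι R ∘ₗ (D i : L →ₗ[R] L)) (ι R ∘ₗ (D j : L →ₗ[R] L))

theorem torusForm_apply (x y : L) :
    torusForm D B x y = ∑ i, ∑ j, B i j • (ι R (D i x) * ι R (D j y)) := by
  simp [torusForm]

theorem torusForm_mem (x y : L) : torusForm D B x y ∈ ⋀[R]^2 L := by
  rw [torusForm_apply]
  exact sum_mem fun i _ => sum_mem fun j _ => Submodule.smul_mem _ _ (ι_mul_ι_mem _ _)

variable {B}

theorem sum_smul_eq_sum_smul_swap (hB : B.IsSymm) {M : Type*} [AddCommGroup M] [Module R M]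
    (f : I → I → M) : ∑ i, ∑ j, B i j • f i j = ∑ i, ∑ j, B i j • f j i := by
  rw [Finset.sum_comm]
  simp only [hB.apply]

theorem torusForm_self (hB : B.IsSymm) (x : L) : torusForm D B x x = 0 := by
  rw [torusForm_apply, ← Finset.sum_product']
  refine Finset.sum_involution (fun p _ => p.swap) (fun p _ => ?_) (fun p _ hp hpp => hp ?_)
    (fun _ _ => Finset.mem_univ _) (fun p _ => p.swap_swap)
  · rw [Prod.fst_swap, Prod.snd_swap, hB.apply, ← smul_add, ι_add_mul_swap, smul_zero]
  · rw [← congrArg Prod.fst hpp, Prod.fst_swap, ι_sq_zero, smul_zero]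

theorem torusForm_mem_twoCocycle (hB : B.IsSymm) :
    (⟨torusForm D B, torusForm_self D hB⟩ :
      LieModule.Cohomology.twoCochain R L (ExteriorAlgebra R L)) ∈
      LieModule.Cohomology.twoCocycle R L (ExteriorAlgebra R L) := by
  rw [LieModule.Cohomology.mem_twoCocycle_iff]
  ext x y z
  let G (i j : I) : ExteriorAlgebra R L :=
    ι R (D i y) * ι R ⁅x, D j z⁆ - ι R (D i x) * ι R ⁅y, D j z⁆ + ι R (D i x) * ι R ⁅z, D j y⁆
  have hG : ⁅x, torusForm D B y z⁆ - ⁅y, torusForm D B x z⁆ + ⁅z, torusForm D B x y⁆ -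
      torusForm D B ⁅x, y⁆ z + torusForm D B ⁅x, z⁆ y - torusForm D B ⁅y, z⁆ x =
      ∑ i, ∑ j, B i j • G i j - ∑ i, ∑ j, B i j • G j i := by
    simp only [torusForm_apply, lie_sum, lie_smul_exteriorAlgebra, ← Finset.sum_sub_distrib,
      ← Finset.sum_add_distrib, ← smul_sub, ← smul_add]
    refine Finset.sum_congr rfl fun i _ => Finset.sum_congr rfl fun j _ => congrArg (B i j • ·) ?_
    have swap (a b : L) : ι R a * ι R b = -(ι R b * ι R a) :=
      eq_neg_of_add_eq_zero_left (ι_add_mul_swap a b)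
    simp only [G, lie_mul_exteriorAlgebra, lie_ι, LieDerivation.apply_lie_eq_sub, map_sub, sub_mul]
    rw [swap (D j y) ⁅x, D i z⁆, swap (D j x) ⁅y, D i z⁆, swap (D j x) ⁅z, D i y⁆]
    abel
  rw [sum_smul_eq_sum_smul_swap hB, sub_self] at hG
  exact hG

theorem wedgeDer_torusForm {D' : LieDerivation R L L} (hD' : ∀ i x, D' (D i x) = D i (D' x))
    (x y : L) : wedgeDer (D' : L →ₗ[R] L) (torusForm D B x y) =
      torusForm D B (D' x) y + torusForm D B x (D' y) := by
  simp only [torusForm_apply, map_sum, map_smul, wedgeDer_ι_mul, wedgeDer_ι,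
    LieDerivation.coeFn_coe, hD', smul_add, Finset.sum_add_distrib]

variable {D}

theorem laplacianDefect_eq {δ : L →ₗ[R] ExteriorAlgebra R L} {hδ : ∀ x, δ x ∈ ⋀[R]^2 L}
    (hδ_lie : ∀ x y, δ ⁅x, y⁆ = ⁅x, δ y⁆ - ⁅y, δ x⁆ + torusForm D B x y) (x : L)
    (w : ExteriorAlgebra R L) :
    laplacianDefect δ hδ x w =
      ∑ i, ∑ j, B i j • (ι R (D i x) * wedgeDer (D j : L →ₗ[R] L) w) := by
  induction w using exteriorAlgebra_induction with
  | algebraMap r =>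
    simp [laplacianDefect, ceDefect, ← Algebra.commutes, ← Algebra.smul_def]
  | add u v hu hv =>
    rw [laplacianDefect, ceDefect] at *
    simp only [mul_add, map_add, smul_add, Finset.sum_add_distrib, lie_add, ← hu, ← hv]
    abel
  | ι_mul y w ih =>
    rw [laplacianDefect_ι_mul hδ_lie, ih, torusForm_apply]
    simp only [Finset.sum_mul, Finset.mul_sum, ← Finset.sum_sub_distrib]
    refine Finset.sum_congr rfl fun i _ => Finset.sum_congr rfl fun j _ => ?_
    rw [wedgeDer_ι_mul, mul_add, ι_mul_ι_mul_comm (D i x) y, smul_mul_assoc, mul_smul_comm,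
      mul_assoc, LieDerivation.coeFn_coe, ← smul_sub, sub_eq_add_neg]

theorem ceBoundary_torusForm (x y : L) :
    ∂ (torusForm D B x y) = ι R (∑ i, ∑ j, B i j • ⁅D i x, D j y⁆) := by
  simp [torusForm_apply]

theorem sum_smul_derivation_comp_lie (hB : B.IsSymm) (x y : L) :
    ∑ i, ∑ j, B i j • D i (D j ⁅x, y⁆) =
      ⁅x, ∑ i, ∑ j, B i j • D i (D j y)⁆ - ⁅y, ∑ i, ∑ j, B i j • D i (D j x)⁆ +
        (2 : R) • ∑ i, ∑ j, B i j • ⁅D i x, D j y⁆ := by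
  rw [two_smul]
  conv_rhs => enter [2, 1]; rw [sum_smul_eq_sum_smul_swap hB]
  simp only [LieDerivation.apply_lie_eq_sub, map_sub, lie_sum, lie_smul, ← Finset.sum_sub_distrib,
    ← Finset.sum_add_distrib, ← smul_sub, ← smul_add]
  refine Finset.sum_congr rfl fun i _ => Finset.sum_congr rfl fun j _ => congrArg (B i j • ·) ?_
  rw [← lie_skew (D i x) (D j y)]
  abel

/-- The value of twice the Laplacian in degree one: the quadratic operator `∑ B i j • D i D j` of
the torus minus the linear correction `g`. -/
def torusCasimir (D : I → LieDerivation R L L) (B : Matrix I I R) (g : LieDerivation R L L) :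
    L →ₗ[R] L :=
  ∑ i, ∑ j, B i j • (D i : L →ₗ[R] L) ∘ₗ (D j : L →ₗ[R] L) - (g : L →ₗ[R] L)

theorem torusCasimir_apply (g : LieDerivation R L L) (x : L) :
    torusCasimir D B g x = ∑ i, ∑ j, B i j • D i (D j x) - g x := by
  simp [torusCasimir]

variable {δ : L →ₗ[R] ExteriorAlgebra R L} {hδ : ∀ x, δ x ∈ ⋀[R]^2 L}

theorem two_smul_ceBoundary_eq_of_lieSpan_eq_top (hB : B.IsSymm)
    (hδ_lie : ∀ x y, δ ⁅x, y⁆ = ⁅x, δ y⁆ - ⁅y, δ x⁆ + torusForm D B x y)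
    {g : LieDerivation R L L} {s : Set L} (hs : LieSubalgebra.lieSpan R L s = ⊤)
    (h : ∀ x ∈ s, (2 : R) • ∂ (δ x) = ι R (torusCasimir D B g x)) (x : L) :
    (2 : R) • ∂ (δ x) = ι R (torusCasimir D B g x) := by
  have hx : x ∈ LieSubalgebra.lieSpan R L s := hs ▸ LieSubalgebra.mem_top x
  induction hx using LieSubalgebra.lieSpan_induction with
  | mem x hx => exact h x hx
  | zero => simp
  | add x y _ _ hx hy => simp only [map_add, smul_add, hx, hy]
  | smul r x _ hx => rw [map_smul, map_smul, smul_comm, hx, map_smul, map_smul]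
  | lie x y _ _ hx hy =>
    rw [hδ_lie, map_add, map_sub, ceBoundary_lie, ceBoundary_lie, smul_add, smul_sub,
      ← lie_smul_exteriorAlgebra, ← lie_smul_exteriorAlgebra, hx, hy, lie_ι, lie_ι,
      ceBoundary_torusForm, ← map_smul, ← map_sub, ← map_add]
    congr 1
    rw [torusCasimir_apply, torusCasimir_apply, torusCasimir_apply,
      sum_smul_derivation_comp_lie hB, LieDerivation.apply_lie_eq_sub, lie_sub, lie_sub]
    abel

/-- The operator on `⋀ L` by which twice the Laplacian acts. -/
def exteriorCasimir (D : I → LieDerivation R L L) (B : Matrix I I R) (g : LieDerivation R L L) :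
    ExteriorAlgebra R L →ₗ[R] ExteriorAlgebra R L :=
  ∑ i, ∑ j, B i j • wedgeDer (D i : L →ₗ[R] L) ∘ₗ wedgeDer (D j : L →ₗ[R] L) -
    wedgeDer (g : L →ₗ[R] L)

theorem exteriorCasimir_apply (g : LieDerivation R L L) (w : ExteriorAlgebra R L) :
    exteriorCasimir D B g w =
      ∑ i, ∑ j, B i j • wedgeDer (D i : L →ₗ[R] L) (wedgeDer (D j : L →ₗ[R] L) w) -
        wedgeDer (g : L →ₗ[R] L) w := by
  simp [exteriorCasimir]

theorem exteriorCasimir_ι_mul (hB : B.IsSymm) (g : LieDerivation R L L) (x : L)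
    (w : ExteriorAlgebra R L) :
    exteriorCasimir D B g (ι R x * w) =
      ι R (torusCasimir D B g x) * w + ι R x * exteriorCasimir D B g w +
        (2 : R) • ∑ i, ∑ j, B i j • (ι R (D i x) * wedgeDer (D j : L →ₗ[R] L) w) := by
  rw [two_smul]
  conv_rhs => enter [2, 1]; rw [sum_smul_eq_sum_smul_swap hB]
  simp only [exteriorCasimir_apply, torusCasimir_apply, wedgeDer_ι_mul, map_add, map_sub, map_sum,
    map_smul, sub_mul, mul_sub, Finset.sum_mul, Finset.mul_sum, smul_mul_assoc, mul_smul_comm,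
    smul_add, Finset.sum_add_distrib, LieDerivation.coeFn_coe]
  abel

theorem two_smul_ceLaplacian (hB : B.IsSymm)
    (hδ_lie : ∀ x y, δ ⁅x, y⁆ = ⁅x, δ y⁆ - ⁅y, δ x⁆ + torusForm D B x y)
    {g : LieDerivation R L L} (h : ∀ x, (2 : R) • ∂ (δ x) = ι R (torusCasimir D B g x)) :
    (2 : R) • ceLaplacian δ hδ = exteriorCasimir D B g := by
  refine LinearMap.ext fun w => ?_
  rw [LinearMap.smul_apply]
  induction w using exteriorAlgebra_induction with
  | algebraMap r => simp [ceLaplacian, exteriorCasimir_apply]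
  | add u v hu hv => rw [map_add, map_add, smul_add, hu, hv]
  | ι_mul x w ih =>
    rw [ceLaplacian_ι_mul, laplacianDefect_eq hδ_lie, exteriorCasimir_ι_mul hB, ← ih, ← h]
    simp only [smul_add, smul_mul_assoc, mul_smul_comm]

end Torus

end ChevalleyEilenberg

section Generation

variable {R L : Type*} [CommRing R] [LieRing L] [LieAlgebra R L]

/-- The quotient map of a Lie algebra by an ideal, as a homomorphism of Lie algebras. -/
def lieQuotientMk (J : LieIdeal R L) : L →ₗ⁅R⁆ L ⧸ J :=
  { (LieSubmodule.Quotient.mk' J : L →ₗ[R] L ⧸ J) with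
    map_lie' := fun {x y} => LieSubmodule.Quotient.mk_bracket (I := J) x y }

theorem lieQuotientMk_surjective (J : LieIdeal R L) : Function.Surjective (lieQuotientMk J) :=
  LieSubmodule.Quotient.surjective_mk' J

theorem lieQuotientMk_eq_zero {J : LieIdeal R L} {x : L} (hx : x ∈ J) : lieQuotientMk J x = 0 :=
  (LieSubmodule.Quotient.mk_eq_zero _).2 hx

/-- The homomorphism from a quotient Lie algebra induced by one that kills the ideal. -/
def lieQuotientLift (J : LieIdeal R L) {L' : Type*} [LieRing L'] [LieAlgebra R L']
    (f : L →ₗ⁅R⁆ L') (hf : J ≤ f.ker) : L ⧸ J →ₗ⁅R⁆ L' :=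
  { J.toSubmodule.liftQ (f : L →ₗ[R] L') fun _ hx => LieHom.mem_ker.1 (hf hx) with
    map_lie' := by
      intro x y
      obtain ⟨x, rfl⟩ := lieQuotientMk_surjective J x
      obtain ⟨y, rfl⟩ := lieQuotientMk_surjective J y
      exact f.map_lie x y }

theorem lieQuotientLift_mk (J : LieIdeal R L) {L' : Type*} [LieRing L'] [LieAlgebra R L']
    (f : L →ₗ⁅R⁆ L') (hf : J ≤ f.ker) (x : L) :
    lieQuotientLift J f hf (lieQuotientMk J x) = f x :=
  rfl

theorem lieSpan_range_freeLieAlgebra_of (X : Type*) :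
    LieSubalgebra.lieSpan R _ (Set.range (FreeLieAlgebra.of R (X := X))) = ⊤ := by
  set S := LieSubalgebra.lieSpan R _ (Set.range (FreeLieAlgebra.of R (X := X)))
  let F : FreeLieAlgebra R X →ₗ⁅R⁆ S :=
    FreeLieAlgebra.lift R fun x => ⟨_, LieSubalgebra.subset_lieSpan ⟨x, rfl⟩⟩
  have hF : S.incl.comp F = LieHom.id := FreeLieAlgebra.hom_ext fun x => by
    simp [F, FreeLieAlgebra.lift_of_apply]
  refine eq_top_iff.2 fun x _ => ?_
  have hx : (F x : FreeLieAlgebra R X) = x := LieHom.congr_fun hF x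
  exact hx ▸ (F x).2

theorem lieSpan_range_of_surjective {X : Type*} {f : FreeLieAlgebra R X →ₗ⁅R⁆ L}
    (hf : Function.Surjective f) :
    LieSubalgebra.lieSpan R L (Set.range fun x => f (FreeLieAlgebra.of R x)) = ⊤ := by
  rw [show (fun x => f (FreeLieAlgebra.of R x)) = f ∘ FreeLieAlgebra.of R from rfl, Set.range_comp,
    ← LieSubalgebra.map_lieSpan, lieSpan_range_freeLieAlgebra_of, ← LieHom.range_eq_map]
  exact (LieHom.range_eq_top f).2 hf

theorem lie_mem_of_mem_lieSpan {M : Type*} [AddCommGroup M] [Module R M] [LieRingModule L M]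
    [LieModule R L M] {s : Set L} {p : Submodule R M} (hp : ∀ x ∈ s, ∀ m ∈ p, ⁅x, m⁆ ∈ p) {x : L}
    (hx : x ∈ LieSubalgebra.lieSpan R L s) : ∀ m ∈ p, ⁅x, m⁆ ∈ p := by
  induction hx using LieSubalgebra.lieSpan_induction with
  | mem x hx => exact hp x hx
  | zero => intro y _; rw [zero_lie]; exact p.zero_mem
  | add x x' _ _ hx hx' => intro y hy; rw [add_lie]; exact p.add_mem (hx y hy) (hx' y hy)
  | smul r x _ hx => intro y hy; rw [smul_lie]; exact p.smul_mem r (hx y hy)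
  | lie x x' _ _ hx hx' =>
    intro y hy
    rw [lie_lie]
    exact p.sub_mem (hx _ (hx' y hy)) (hx' _ (hx y hy))

theorem submodule_eq_top_of_lie_mem {s : Set L} (hs : LieSubalgebra.lieSpan R L s = ⊤)
    {p : Submodule R L} (hsp : s ⊆ p) (hp : ∀ x ∈ s, ∀ y ∈ p, ⁅x, y⁆ ∈ p) : p = ⊤ := by
  have h (x : L) : ∀ y ∈ p, ⁅x, y⁆ ∈ p := lie_mem_of_mem_lieSpan hp (hs ▸ LieSubalgebra.mem_top x)
  let P : LieSubalgebra R L := { p with lie_mem' := fun {x} _ _ hy => h x _ hy }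
  have hP : LieSubalgebra.lieSpan R L s ≤ P := LieSubalgebra.lieSpan_le.2 hsp
  exact eq_top_iff.2 fun x _ => hP (hs ▸ LieSubalgebra.mem_top x)

theorem lieHom_ad_pow {L' : Type*} [LieRing L'] [LieAlgebra R L'] (f : L →ₗ⁅R⁆ L') (x y : L)
    (n : ℕ) : f ((LieAlgebra.ad R L x ^ n) y) = (LieAlgebra.ad R L' (f x) ^ n) (f y) := by
  induction n with
  | zero => rfl
  | succ n ih => rw [pow_succ', pow_succ', Module.End.mul_apply, Module.End.mul_apply,
      LieAlgebra.ad_apply, LieAlgebra.ad_apply, LieHom.map_lie, ih]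

end Generation

section SerreAlgebra

variable (R : Type*) [CommRing R] {I : Type*} (A : Matrix I I ℤ)

/-- The ideal of the free Lie algebra generated by the Serre elements
`(ad e_i) ^ (1 - A i j) e_j` for `i ≠ j`. -/
def serreIdeal : LieIdeal R (FreeLieAlgebra R I) :=
  LieSubmodule.lieSpan R _ {x | ∃ i j, i ≠ j ∧
    x = (LieAlgebra.ad R _ (FreeLieAlgebra.of R i) ^ ((-A i j).toNat + 1)) (FreeLieAlgebra.of R j)}

/-- The Lie algebra generated by `e_i`, `i : I`, subject to the Serre relations: the positive part
of the Kac–Moody algebra of `A`. -/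
abbrev SerreAlgebra : Type _ :=
  FreeLieAlgebra R I ⧸ serreIdeal R A

namespace SerreAlgebra

/-- The Chevalley generator `e_i`. -/
def e (i : I) : SerreAlgebra R A :=
  lieQuotientMk _ (FreeLieAlgebra.of R i)

theorem ad_e_pow_e {i j : I} (hij : i ≠ j) :
    (LieAlgebra.ad R _ (e R A i) ^ ((-A i j).toNat + 1)) (e R A j) = 0 := by
  rw [e, e, ← lieHom_ad_pow]
  exact lieQuotientMk_eq_zero (LieSubmodule.subset_lieSpan ⟨i, j, hij, rfl⟩)

theorem lieSpan_range_e : LieSubalgebra.lieSpan R _ (Set.range (e R A)) = ⊤ :=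
  lieSpan_range_of_surjective (lieQuotientMk_surjective _)

variable {R A}

section lift

variable {L : Type*} [LieRing L] [LieAlgebra R L] (a : I → L)
  (ha : ∀ i j, i ≠ j → (LieAlgebra.ad R L (a i) ^ ((-A i j).toNat + 1)) (a j) = 0)

/-- The universal property of the Serre algebra. -/
def lift : SerreAlgebra R A →ₗ⁅R⁆ L :=
  lieQuotientLift _ (FreeLieAlgebra.lift R a) <| by
    refine LieSubmodule.lieSpan_le.2 ?_
    rintro _ ⟨i, j, hij, rfl⟩
    rw [SetLike.mem_coe, LieHom.mem_ker, lieHom_ad_pow, FreeLieAlgebra.lift_of_apply,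
      FreeLieAlgebra.lift_of_apply, ha i j hij]

@[simp]
theorem lift_e (i : I) : lift a ha (e R A i) = a i :=
  (lieQuotientLift_mk _ _ _ _).trans (FreeLieAlgebra.lift_of_apply a i)

end lift

theorem hom_ext {L : Type*} [LieRing L] [LieAlgebra R L] {f g : SerreAlgebra R A →ₗ⁅R⁆ L}
    (h : ∀ i, f (e R A i) = g (e R A i)) : f = g := by
  ext x
  obtain ⟨x, rfl⟩ := lieQuotientMk_surjective _ x
  exact LieHom.congr_fun (FreeLieAlgebra.hom_ext (F₁ := f.comp (lieQuotientMk _))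
    (F₂ := g.comp (lieQuotientMk _)) h) x

section TwistedDerivation

open LieAlgebra LieModule.Cohomology

variable {M : Type*} [AddCommGroup M] [Module R M] [LieRingModule (SerreAlgebra R A) M]
  [LieModule R (SerreAlgebra R A) M]

theorem ad_ofProd_pow_ofProd (c : twoCocycle R (SerreAlgebra R A) M) {m : I → M} {i j : I}
    {z : ℕ → M} (hz_zero : z 0 = m j)
    (hz_succ : ∀ n, z (n + 1) = (c : SerreAlgebra R A →ₗ[R] SerreAlgebra R A →ₗ[R] M) (e R A i)
      ((ad R _ (e R A i) ^ n) (e R A j)) + ⁅e R A i, z n⁆ -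
        ⁅(ad R _ (e R A i) ^ n) (e R A j), m i⁆) (n : ℕ) :
    (ad R _ (ofProd c (e R A i, m i)) ^ n) (ofProd c (e R A j, m j)) =
      ofProd c ((ad R _ (e R A i) ^ n) (e R A j), z n) := by
  induction n with
  | zero => rw [pow_zero, pow_zero, hz_zero]; rfl
  | succ n ih =>
    rw [pow_succ', pow_succ', Module.End.mul_apply, Module.End.mul_apply, ih, hz_succ]
    rfl

-- The graph of `δ` is a homomorphism to the extension of the algebra by `M` with cocycle `c`.
theorem exists_twistedDerivation (c : twoCocycle R (SerreAlgebra R A) M) (m : I → M)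
    (hm : ∀ i j, i ≠ j → ∃ z : ℕ → M, z 0 = m j ∧
      (∀ n, z (n + 1) = (c : SerreAlgebra R A →ₗ[R] SerreAlgebra R A →ₗ[R] M) (e R A i)
        ((ad R _ (e R A i) ^ n) (e R A j)) + ⁅e R A i, z n⁆ -
          ⁅(ad R _ (e R A i) ^ n) (e R A j), m i⁆) ∧
      z ((-A i j).toNat + 1) = 0) :
    ∃ δ : SerreAlgebra R A →ₗ[R] M, (∀ i, δ (e R A i) = m i) ∧ ∀ x y, δ ⁅x, y⁆ =
      ⁅x, δ y⁆ - ⁅y, δ x⁆ + (c : SerreAlgebra R A →ₗ[R] SerreAlgebra R A →ₗ[R] M) x y := by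
  let F : SerreAlgebra R A →ₗ⁅R⁆ ofTwoCocycle c :=
    lift (fun i => ofProd c (e R A i, m i)) fun i j hij => by
      obtain ⟨z, hz_zero, hz_succ, hz_end⟩ := hm i j hij
      rw [ad_ofProd_pow_ofProd c hz_zero hz_succ, ad_e_pow_e R A hij, hz_end]
      rfl
  have hF (i : I) : F (e R A i) = ofProd c (e R A i, m i) := lift_e _ _ i
  let fst : ofTwoCocycle c →ₗ⁅R⁆ SerreAlgebra R A :=
    { toFun := fun p => p.carrier.1
      map_add' := fun _ _ => rfl
      map_smul' := fun _ _ => rfl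
      map_lie' := rfl }
  have hfst (x : SerreAlgebra R A) : (F x).carrier.1 = x :=
    LieHom.congr_fun (hom_ext (f := fst.comp F) (g := LieHom.id) fun i => by
      rw [LieHom.comp_apply, hF]; rfl) x
  let δ : SerreAlgebra R A →ₗ[R] M :=
    { toFun := fun x => (F x).carrier.2
      map_add' := fun x y => by rw [map_add]; rfl
      map_smul' := fun r x => by rw [map_smul]; rfl }
  refine ⟨δ, fun i => ?_, fun x y => ?_⟩
  · change (F (e R A i)).carrier.2 = m i
    rw [hF]; rfl
  · have h : δ ⁅x, y⁆ = (⁅F x, F y⁆ : ofTwoCocycle c).carrier.2 := by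
      rw [← LieHom.map_lie]; rfl
    rw [h, bracket_ofTwoCocycle]
    change (c : SerreAlgebra R A →ₗ[R] SerreAlgebra R A →ₗ[R] M) (F x).carrier.1 (F y).carrier.1 +
      ⁅(F x).carrier.1, δ y⁆ - ⁅(F y).carrier.1, δ x⁆ = _
    rw [hfst, hfst]
    abel

end TwistedDerivation

end SerreAlgebra

end SerreAlgebra

namespace SerreAlgebra

open LieAlgebra LieModule.Cohomology ExteriorAlgebra

variable {R : Type*} [CommRing R] {I : Type*} {A : Matrix I I ℤ}

theorem exists_derivation (a : I → R) :
    ∃ D : LieDerivation R (SerreAlgebra R A) (SerreAlgebra R A),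
      ∀ i, D (e R A i) = a i • e R A i := by
  have h (i j : I) (hij : i ≠ j) : ∃ z : ℕ → SerreAlgebra R A, z 0 = a j • e R A j ∧
      (∀ n, z (n + 1) = 0 + ⁅e R A i, z n⁆ - ⁅(ad R _ (e R A i) ^ n) (e R A j), a i • e R A i⁆) ∧
      z ((-A i j).toNat + 1) = 0 := by
    refine ⟨fun n => (n * a i + a j) • (ad R _ (e R A i) ^ n) (e R A j), by simp,
      fun n => ?_, ?_⟩ <;> dsimp only
    · rw [lie_smul, lie_smul, ← lie_skew ((ad R _ (e R A i) ^ n) (e R A j)), smul_neg,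
        sub_neg_eq_add, zero_add, ← add_smul, pow_succ', Module.End.mul_apply, ad_apply]
      push_cast
      ring_nf
    · rw [ad_e_pow_e R A hij, smul_zero]
  obtain ⟨δ, hδ_e, hδ_lie⟩ := exists_twistedDerivation 0 _ h
  exact ⟨⟨δ, fun x y => (hδ_lie x y).trans (add_zero _)⟩, hδ_e⟩

/-- The diagonal derivation that multiplies `e_i` by `a i`. -/
def diagDer (a : I → R) : LieDerivation R (SerreAlgebra R A) (SerreAlgebra R A) :=
  (exists_derivation a).choose

@[simp]
theorem diagDer_e (a : I → R) (i : I) : diagDer a (e R A i) = a i • e R A i :=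
  (exists_derivation a).choose_spec i

theorem derivation_ext {D D' : LieDerivation R (SerreAlgebra R A) (SerreAlgebra R A)}
    (h : ∀ i, D (e R A i) = D' (e R A i)) : D = D' :=
  LieDerivation.ext_of_lieSpan_eq_top _ (lieSpan_range_e R A) <| by rintro _ ⟨i, rfl⟩; exact h i

theorem diagDer_comm (a b : I → R) (x : SerreAlgebra R A) :
    diagDer a (diagDer b x) = diagDer b (diagDer a x) := by
  have h : ⁅(diagDer a : LieDerivation R (SerreAlgebra R A) (SerreAlgebra R A)), diagDer b⁆ = 0 :=
    derivation_ext fun i => by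
      rw [LieDerivation.commutator_apply]; simp [smul_smul, mul_comm (a i)]
  rw [← sub_eq_zero, ← LieDerivation.commutator_apply, h, LieDerivation.zero_apply]

theorem diagDer_ad_pow (a : I → R) (i j : I) (n : ℕ) :
    diagDer a ((ad R _ (e R A i) ^ n) (e R A j)) =
      (n * a i + a j) • (ad R _ (e R A i) ^ n) (e R A j) := by
  induction n with
  | zero => simp
  | succ n ih =>
    rw [pow_succ', Module.End.mul_apply, ad_apply, LieDerivation.apply_lie_eq_add, ih, diagDer_e,
      lie_smul, smul_lie, ← add_smul]
    push_cast
    ring_nf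

variable [DecidableEq I]

/-- The derivation that counts the occurrences of `e_i`. -/
def degDer (R : Type*) [CommRing R] (A : Matrix I I ℤ) (i : I) :
    LieDerivation R (SerreAlgebra R A) (SerreAlgebra R A) :=
  diagDer (Pi.single i 1)

theorem lieDerivation_sum_apply {L M ι : Type*} [LieRing L] [LieAlgebra R L] [AddCommGroup M]
    [Module R M] [LieRingModule L M] [LieModule R L M] (s : Finset ι) (D : ι → LieDerivation R L M)
    (x : L) : (∑ i ∈ s, D i) x = ∑ i ∈ s, D i x :=
  map_sum (⟨⟨fun D => D x, rfl⟩, fun _ _ => rfl⟩ : LieDerivation R L M →+ M) D s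

theorem diagDer_apply_eq_sum [Fintype I] (a : I → R) (x : SerreAlgebra R A) :
    diagDer a x = ∑ i, a i • degDer R A i x := by
  rw [derivation_ext (D := diagDer a) (D' := ∑ i, a i • degDer R A i) fun i => by
    simp [lieDerivation_sum_apply, degDer, Pi.single_apply], lieDerivation_sum_apply]
  rfl

end SerreAlgebra

/-- The matrix with entries `d i * A i j`. -/
def symmetrization {R I : Type*} [Ring R] (d : I → R) (A : Matrix I I ℤ) : Matrix I I R :=
  .of fun i j => d i * A i j

namespace SerreAlgebra

open LieAlgebra LieModule.Cohomology ExteriorAlgebra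

variable {R : Type*} [CommRing R] {I : Type*} [Fintype I] [DecidableEq I] {A : Matrix I I ℤ}
  {d : I → R}

theorem torusForm_degDer_e (B : Matrix I I R) (i : I) (x : SerreAlgebra R A) :
    torusForm (degDer R A) B (e R A i) x = ι R (e R A i) * ι R (diagDer (B i) x) := by
  rw [torusForm_apply, Finset.sum_eq_single i, diagDer_apply_eq_sum (B i)]
  · simp [degDer, Finset.mul_sum]
  · intro j _ hj
    simp [degDer, hj.symm]
  · simp

-- The coefficients below are the values of `δ` on `(ad e_i) ^ n e_j`: they vanish for
-- `n = 1 - A i j`, so that `δ` respects the Serre relations.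
theorem exists_torusForm_derivation (hA : IsGCM A) (hd : (symmetrization d A).IsSymm) :
    ∃ δ : SerreAlgebra R A →ₗ[R] ExteriorAlgebra R (SerreAlgebra R A), (∀ i, δ (e R A i) = 0) ∧
      ∀ x y, δ ⁅x, y⁆ =
        ⁅x, δ y⁆ - ⁅y, δ x⁆ + torusForm (degDer R A) (symmetrization d A) x y := by
  refine exists_twistedDerivation ⟨_, torusForm_mem_twoCocycle (degDer R A) hd⟩ 0 fun i j hij =>
    ⟨fun n => (d i * (n * (n - 1 + A i j))) •
      (ι R (e R A i) * ι R ((ad R _ (e R A i) ^ (n - 1)) (e R A j))), by simp, fun n => ?_, ?_⟩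
  · have hform : torusForm (degDer R A) (symmetrization d A) (e R A i)
        ((ad R _ (e R A i) ^ n) (e R A j)) = (d i * (2 * n + A i j)) •
          (ι R (e R A i) * ι R ((ad R _ (e R A i) ^ n) (e R A j))) := by
      rw [torusForm_degDer_e, diagDer_ad_pow, map_smul, mul_smul_comm]
      simp only [symmetrization, Matrix.of_apply, hA.1]
      push_cast
      ring_nf
    dsimp only
    rw [lie_smul_exteriorAlgebra, Pi.zero_apply, lie_zero, sub_zero, lie_mul_exteriorAlgebra, lie_ι,
      lie_self, map_zero, zero_mul, zero_add, lie_ι, hform]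
    cases n with
    | zero => simp
    | succ n =>
      rw [Nat.add_sub_cancel, Nat.add_sub_cancel, ← ad_apply R, ← Module.End.mul_apply, ← pow_succ',
        ← add_smul]
      push_cast
      ring_nf
  · have h : (((-A i j).toNat : ℤ) : R) = ((-A i j : ℤ) : R) :=
      congrArg _ (Int.toNat_of_nonneg (neg_nonneg.2 (hA.2.1 i j hij)))
    push_cast at h
    simp [h]

theorem torusForm_derivation_mem_exteriorPower_two
    {δ : SerreAlgebra R A →ₗ[R] ExteriorAlgebra R (SerreAlgebra R A)} (hδ_e : ∀ i, δ (e R A i) = 0)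
    {B : Matrix I I R} (hδ_lie :
      ∀ x y, δ ⁅x, y⁆ = ⁅x, δ y⁆ - ⁅y, δ x⁆ + torusForm (degDer R A) B x y)
    (x : SerreAlgebra R A) : δ x ∈ ⋀[R]^2 (SerreAlgebra R A) := by
  have hx : x ∈ LieSubalgebra.lieSpan R _ (Set.range (e R A)) :=
    lieSpan_range_e R A ▸ LieSubalgebra.mem_top x
  induction hx using LieSubalgebra.lieSpan_induction with
  | mem _ hx => obtain ⟨i, rfl⟩ := hx; rw [hδ_e]; exact zero_mem _
  | zero => rw [map_zero]; exact zero_mem _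
  | add x y _ _ hx hy => rw [map_add]; exact add_mem hx hy
  | smul r x _ hx => rw [map_smul]; exact Submodule.smul_mem _ r hx
  | lie x y _ _ hx hy =>
    rw [hδ_lie]
    exact add_mem (sub_mem (lie_mem_exteriorPower_two x hy) (lie_mem_exteriorPower_two y hx))
      (torusForm_mem _ _ x y)

theorem torusForm_derivation_diagDer
    {δ : SerreAlgebra R A →ₗ[R] ExteriorAlgebra R (SerreAlgebra R A)} (hδ_e : ∀ i, δ (e R A i) = 0)
    {B : Matrix I I R} (hδ_lie :
      ∀ x y, δ ⁅x, y⁆ = ⁅x, δ y⁆ - ⁅y, δ x⁆ + torusForm (degDer R A) B x y)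
    (a : I → R) (x : SerreAlgebra R A) :
    δ (diagDer a x) = wedgeDer (diagDer a : LieDerivation R (SerreAlgebra R A) _) (δ x) := by
  have hx : x ∈ LieSubalgebra.lieSpan R _ (Set.range (e R A)) :=
    lieSpan_range_e R A ▸ LieSubalgebra.mem_top x
  induction hx using LieSubalgebra.lieSpan_induction with
  | mem _ hx => obtain ⟨i, rfl⟩ := hx; simp [hδ_e]
  | zero => simp
  | add x y _ _ hx hy => simp only [map_add, hx, hy]
  | smul r x _ hx => simp only [map_smul, hx]
  | lie x y _ _ hx hy =>
    rw [LieDerivation.apply_lie_eq_add, map_add, hδ_lie, hδ_lie, hδ_lie, hx, hy]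
    rw [map_add, map_sub, wedgeDer_lie, wedgeDer_lie,
      wedgeDer_torusForm (degDer R A) fun i => diagDer_comm a _]
    abel

theorem two_smul_ceBoundary_torusForm_derivation (hA : IsGCM A) (hd : (symmetrization d A).IsSymm)
    {δ : SerreAlgebra R A →ₗ[R] ExteriorAlgebra R (SerreAlgebra R A)} (hδ_e : ∀ i, δ (e R A i) = 0)
    (hδ_lie : ∀ x y, δ ⁅x, y⁆ =
      ⁅x, δ y⁆ - ⁅y, δ x⁆ + torusForm (degDer R A) (symmetrization d A) x y)
    (x : SerreAlgebra R A) : (2 : R) • ceBoundary R _ (δ x) =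
      ι R (torusCasimir (degDer R A) (symmetrization d A) (diagDer fun i => 2 * d i) x) := by
  refine two_smul_ceBoundary_eq_of_lieSpan_eq_top hd hδ_lie (lieSpan_range_e R A) ?_ x
  rintro _ ⟨i, rfl⟩
  rw [hδ_e, map_zero, smul_zero, torusCasimir_apply, eq_comm]
  have h (j : I) : degDer R A j (e R A i) = if i = j then e R A i else 0 := by
    simp [degDer, Pi.single_apply]
  simp only [h, symmetrization, apply_ite (degDer R A _), map_zero]
  simp [hA.1, mul_comm (d i)]

theorem exists_codifferential (hA : IsGCM A) (hd : (symmetrization d A).IsSymm) :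
    ∃ (δ : SerreAlgebra R A →ₗ[R] ExteriorAlgebra R (SerreAlgebra R A)) (hδ : ∀ x, δ x ∈ ⋀[R]^2 _),
      (∀ a x, δ (diagDer a x) = wedgeDer (diagDer a : LieDerivation R (SerreAlgebra R A) _) (δ x)) ∧
      (2 : R) • ceLaplacian δ hδ =
        exteriorCasimir (degDer R A) (symmetrization d A) (diagDer fun i => 2 * d i) := by
  obtain ⟨δ, hδ_e, hδ_lie⟩ := exists_torusForm_derivation (R := R) hA hd
  exact ⟨δ, torusForm_derivation_mem_exteriorPower_two hδ_e hδ_lie,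
    torusForm_derivation_diagDer hδ_e hδ_lie, two_smul_ceLaplacian hd hδ_lie
      (two_smul_ceBoundary_torusForm_derivation hA hd hδ_e hδ_lie)⟩

end SerreAlgebra

section JointEigenspaces

variable {K V ι : Type*} [Field K] [AddCommGroup V] [Module K V] {f : ι → Module.End K V}

theorem iSupIndep_iInf_eigenspace (hf : ∀ i j, Commute (f i) (f j)) :
    iSupIndep fun χ : ι → K => ⨅ i, (f i).eigenspace (χ i) :=
  (Module.End.independent_iInf_maxGenEigenspace_of_forall_mapsTo f fun i j =>
    Module.End.mapsTo_maxGenEigenspace_of_comm (hf j i)).mono fun χ =>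
      iInf_mono fun i => Module.End.genEigenspace_le_maximal (f i) (χ i) 1

theorem iInf_eigenspace_eq_iSup (hf : ∀ i j, Commute (f i) (f j)) {κ : Type*}
    {U : κ → Submodule K V} (hU : ⨆ k, U k = ⊤) {χ : κ → ι → K}
    (hχ : ∀ k i, U k ≤ (f i).eigenspace (χ k i)) (c : ι → K) :
    ⨅ i, (f i).eigenspace (c i) = ⨆ k, ⨆ _ : χ k = c, U k := by
  set E : (ι → K) → Submodule K V := fun χ => ⨅ i, (f i).eigenspace (χ i)
  have hUE (c : ι → K) : ⨆ k, ⨆ _ : χ k = c, U k ≤ E c :=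
    iSup₂_le fun k hk => hk ▸ le_iInf (hχ k)
  refine le_antisymm (fun x hx => ?_) (hUE c)
  have htop : (⨆ k, ⨆ _ : χ k = c, U k) ⊔ ⨆ c', ⨆ _ : c' ≠ c, E c' = ⊤ := by
    rw [eq_top_iff, ← hU]
    refine iSup_le fun k => ?_
    by_cases hk : χ k = c
    · exact le_sup_of_le_left (le_iSup₂_of_le k hk le_rfl)
    · exact le_sup_of_le_right (le_iSup₂_of_le (χ k) hk (le_iInf (hχ k)))
  obtain ⟨y, hy, z, hz, rfl⟩ := Submodule.mem_sup.1 (htop ▸ Submodule.mem_top : x ∈ _)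
  have hz0 : z = 0 := Submodule.disjoint_def.1 (iSupIndep_iInf_eigenspace hf c) z
    ((Submodule.add_mem_iff_right (E c) (hUE c hy)).1 hx) hz
  rwa [hz0, add_zero]

end JointEigenspaces

section EulerCharacteristic

open ExteriorAlgebra

section DiagonalOperators

variable {K V κ : Type*} [Field K] [AddCommGroup V] [Module K V] (b : Module.Basis κ K V)

theorem repr_apply_of_forall_apply_eq_smul {f : Module.End K V} {χ : κ → K}
    (hf : ∀ k, f (b k) = χ k • b k) (v : V) (k : κ) : b.repr (f v) k = χ k * b.repr v k := by
  have h : b.coord k ∘ₗ f = χ k • b.coord k := b.ext fun l => by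
    by_cases h : l = k <;> simp [hf, h]
  exact LinearMap.congr_fun h v

theorem repr_apply_eq_zero_of_commute {f T : Module.End K V} {χ : κ → K}
    (hf : ∀ k, f (b k) = χ k • b k) (hT : ∀ v, T (f v) = f (T v)) {k l : κ} (hkl : χ l ≠ χ k) :
    b.repr (T (b k)) l = 0 := by
  have h := congrArg (b.repr · l) (hT (b k))
  simp only [hf, map_smul, Finsupp.smul_apply, smul_eq_mul,
    repr_apply_of_forall_apply_eq_smul b hf] at h
  exact (mul_eq_mul_right_iff.1 h).resolve_left (Ne.symm hkl)

theorem repr_apply_eq_sum (T : Module.End K V) {S : Finset κ} {v : V}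
    (hv : ∀ l ∉ S, b.repr v l = 0) (k : κ) :
    b.repr (T v) k = ∑ l ∈ S, b.repr v l * b.repr (T (b l)) k := by
  have hsum : v = ∑ l ∈ S, b.repr v l • b l := by
    conv_lhs => rw [← b.linearCombination_repr v]
    exact Finsupp.sum_of_support_subset _
      (fun l hl => by_contra fun h => Finsupp.mem_support_iff.1 hl (hv l h)) _ (by simp)
  conv_lhs => rw [hsum]
  simp

-- The Hopf trace argument: `P` anticommutes with `p`, so `P p q` and `P q p` have opposite traces.
theorem sum_eq_zero_of_anticommute {S : Finset κ} {P p q : Module.End K V} {ε : κ → K} {c : K}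
    (hP : ∀ k, P (b k) = ε k • b k) (hpP : ∀ v, p (P v) = -P (p v))
    (hp : ∀ k ∈ S, ∀ l ∉ S, b.repr (p (b k)) l = 0)
    (hq : ∀ k ∈ S, ∀ l ∉ S, b.repr (q (b k)) l = 0)
    (hpq : ∀ k ∈ S, p (q (b k)) + q (p (b k)) = c • b k) (hc : c ≠ 0) :
    ∑ k ∈ S, ε k = 0 := by
  have hε (k l : κ) : ε l * b.repr (p (b k)) l = -(ε k * b.repr (p (b k)) l) := by
    have h := congrArg (b.repr · l) (hpP (b k))
    simp only [hP, map_smul, map_neg, Finsupp.neg_apply, Finsupp.smul_apply, smul_eq_mul,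
      repr_apply_of_forall_apply_eq_smul b hP] at h
    rw [h, neg_neg]
  have htrace : ∑ k ∈ S, ε k * b.repr (p (q (b k))) k =
      -∑ k ∈ S, ε k * b.repr (q (p (b k))) k := by
    calc ∑ k ∈ S, ε k * b.repr (p (q (b k))) k
        = ∑ k ∈ S, ∑ l ∈ S, b.repr (q (b k)) l * (ε k * b.repr (p (b l)) k) :=
          Finset.sum_congr rfl fun k hk => by
            rw [repr_apply_eq_sum b p (hq k hk), Finset.mul_sum]
            exact Finset.sum_congr rfl fun l _ => mul_left_comm ..
      _ = ∑ l ∈ S, ∑ k ∈ S, -(ε l * (b.repr (p (b l)) k * b.repr (q (b k)) l)) := by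
          rw [Finset.sum_comm]
          exact Finset.sum_congr rfl fun l _ => Finset.sum_congr rfl fun k _ => by
            rw [hε]; ring
      _ = -∑ k ∈ S, ε k * b.repr (q (p (b k))) k := by
          simp only [Finset.sum_neg_distrib, ← Finset.mul_sum]
          exact congrArg _ (Finset.sum_congr rfl fun k hk => by
            rw [repr_apply_eq_sum b q (hp k hk)])
  have htotal : c * ∑ k ∈ S, ε k = ∑ k ∈ S, ε k * b.repr (p (q (b k)) + q (p (b k))) k := by
    rw [Finset.mul_sum]
    exact Finset.sum_congr rfl fun k hk => by simp [hpq k hk, mul_comm]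
  simp only [map_add, Finsupp.add_apply, mul_add, Finset.sum_add_distrib, htrace,
    neg_add_cancel] at htotal
  exact (mul_eq_zero.1 htotal).resolve_left hc

end DiagonalOperators

section Basis

variable {R V J : Type*} [CommRing R] [AddCommGroup V] [Module R V] [LinearOrder J]
  (b : Module.Basis J R V)

theorem exteriorAlgebra_basis_eq_prod (s : Finset J) :
    b.ExteriorAlgebra s = ((s.sort (· ≤ ·)).map fun j => ι R (b j)).prod := by
  rw [ExteriorAlgebra.basis_apply, ← s.listMap_orderEmbOfFin_finRange rfl, List.map_map,
    ← List.ofFn_eq_map]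
  exact ExteriorAlgebra.ιMulti_apply _

theorem wedgeDer_exteriorAlgebra_basis {f : V →ₗ[R] V} {c : J → R} (hf : ∀ j, f (b j) = c j • b j)
    (s : Finset J) :
    wedgeDer f (b.ExteriorAlgebra s) = (∑ j ∈ s, c j) • b.ExteriorAlgebra s := by
  have hlist (l : List J) : wedgeDer f (l.map fun j => ι R (b j)).prod =
      (l.map c).sum • (l.map fun j => ι R (b j)).prod := by
    induction l with
    | nil => simp
    | cons j l ih =>
      simp only [List.map_cons, List.prod_cons, List.sum_cons, wedgeDer_ι_mul, ih, hf, map_smul,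
        smul_mul_assoc, mul_smul_comm, add_smul]
  rw [exteriorAlgebra_basis_eq_prod, hlist, ← List.sum_toFinset _ (s.sort_nodup _), s.sort_toFinset]

theorem involute_exteriorAlgebra_basis (s : Finset J) :
    CliffordAlgebra.involute (b.ExteriorAlgebra s) = (-1 : R) ^ s.card • b.ExteriorAlgebra s := by
  have h := CliffordAlgebra.involute_prod_map_ι (Q := (0 : QuadraticForm R V))
    ((s.sort (· ≤ ·)).map b)
  rw [List.map_map, List.length_map, Finset.length_sort] at h
  rw [exteriorAlgebra_basis_eq_prod]
  exact h

end Basis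

theorem involute_ι_mul {R V : Type*} [CommRing R] [AddCommGroup V] [Module R V] (v : V)
    (w : ExteriorAlgebra R V) :
    CliffordAlgebra.involute (ι R v * w) = -(ι R v * CliffordAlgebra.involute w) := by
  rw [map_mul, ← neg_mul]
  exact congrArg (· * _) (CliffordAlgebra.involute_ι v)

theorem wedgeDer_involute {R V : Type*} [CommRing R] [AddCommGroup V] [Module R V] (f : V →ₗ[R] V)
    (w : ExteriorAlgebra R V) :
    wedgeDer f (CliffordAlgebra.involute w) = CliffordAlgebra.involute (wedgeDer f w) := by
  induction w using exteriorAlgebra_induction with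
  | algebraMap r => simp
  | add u v hu hv => simp only [map_add, hu, hv]
  | ι_mul x w ih =>
    rw [involute_ι_mul, map_neg, wedgeDer_ι_mul, ih, wedgeDer_ι_mul, map_add, involute_ι_mul,
      involute_ι_mul, neg_add]

section LieAlgebra

variable {K L J : Type*} [Field K] [LieRing L] [LieAlgebra K L]

theorem ceBoundary_involute (w : ExteriorAlgebra K L) :
    ceBoundary K L (CliffordAlgebra.involute w) = -CliffordAlgebra.involute (ceBoundary K L w) := by
  induction w using exteriorAlgebra_induction with
  | algebraMap r => simp
  | add u v hu hv => simp only [map_add, hu, hv, neg_add]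
  | ι_mul x w ih =>
    rw [involute_ι_mul, map_neg, ceBoundary_ι_mul, ceBoundary_ι_mul, ih, map_sub, involute_ι_mul,
      lie_exteriorAlgebra_eq, lie_exteriorAlgebra_eq, wedgeDer_involute, mul_neg]

theorem sum_neg_one_pow_card_eq_zero [LinearOrder J] (b : Module.Basis J K L) {I : Type*}
    {D : I → LieDerivation K L L} {χ : I → J → K} (hD : ∀ i j, D i (b j) = χ i j • b j)
    {δ : L →ₗ[K] ExteriorAlgebra K L} {hδ : ∀ x, δ x ∈ ⋀[K]^2 L}
    (hδD : ∀ i x, δ (D i x) = wedgeDer (D i : L →ₗ[K] L) (δ x)) {S : Finset (Finset J)} {c : I → K}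
    (hS : ∀ s, s ∈ S ↔ ∀ i, ∑ j ∈ s, χ i j = c i) {q : K} (hq : q ≠ 0)
    (hΔ : ∀ s ∈ S, ceLaplacian δ hδ (b.ExteriorAlgebra s) = q • b.ExteriorAlgebra s) :
    ∑ s ∈ S, (-1 : K) ^ s.card = 0 := by
  have hsep {T : Module.End K (ExteriorAlgebra K L)}
      (hT : ∀ i w, T (wedgeDer (D i : L →ₗ[K] L) w) = wedgeDer (D i : L →ₗ[K] L) (T w)) :
      ∀ s ∈ S, ∀ t ∉ S, b.ExteriorAlgebra.repr (T (b.ExteriorAlgebra s)) t = 0 := by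
    intro s hs t ht
    obtain ⟨i, hi⟩ := not_forall.1 (mt (hS t).2 ht)
    exact repr_apply_eq_zero_of_commute _ (wedgeDer_exteriorAlgebra_basis b (hD i)) (hT i)
      ((hS s).1 hs i ▸ hi)
  exact sum_eq_zero_of_anticommute b.ExteriorAlgebra
    (P := (CliffordAlgebra.involute (Q := (0 : QuadraticForm K L))).toLinearMap)
    (involute_exteriorAlgebra_basis b) ceBoundary_involute (hsep fun i => ceBoundary_wedgeDer (D i))
    (hsep fun i => ceCodiff_wedgeDer (hδD i)) hΔ hq

end LieAlgebra

end EulerCharacteristic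

namespace SerreAlgebra

open LieAlgebra ExteriorAlgebra

variable (K : Type*) [Field K] {I : Type*} (A : Matrix I I ℤ)

section Words

/-- The iterated bracket `⁅e k₁, ⁅e k₂, … ⁅e kₙ, e i⁆…⁆⁆`. -/
def word (i : I) (l : List I) : SerreAlgebra K A :=
  l.foldr (fun k x => ⁅e K A k, x⁆) (e K A i)

variable {K A}

theorem iSup_span_word : ⨆ p : I × List I, K ∙ word K A p.1 p.2 = ⊤ := by
  rw [← Submodule.span_range_eq_iSup]
  refine submodule_eq_top_of_lie_mem (lieSpan_range_e K A) ?_ ?_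
  · rintro _ ⟨i, rfl⟩
    exact Submodule.subset_span ⟨(i, []), rfl⟩
  · rintro _ ⟨k, rfl⟩ y hy
    refine Submodule.span_le (p := (Submodule.span K _).comap (ad K _ (e K A k))).2 ?_ hy
    rintro _ ⟨⟨i, l⟩, rfl⟩
    exact Submodule.subset_span ⟨(i, k :: l), rfl⟩

theorem e_ne_zero (i : I) : e K A i ≠ 0 := by
  obtain ⟨δ, hδ, -⟩ := exists_twistedDerivation (R := K) (A := A)
    (M := ExteriorAlgebra K (SerreAlgebra K A)) 0 (fun _ => 1) fun i j _ =>
      ⟨fun n => if n = 0 then 1 else 0, by simp, fun n => by by_cases hn : n = 0 <;> simp [hn],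
        by simp⟩
  intro h
  simpa [h] using hδ i

end Words

section Weights

variable [DecidableEq I]

/-- The component of `SerreAlgebra K A` of weight `∑ β i α_i`. Weights are integral so that they
can be subtracted. -/
def weightSpace (β : I → ℤ) : Submodule K (SerreAlgebra K A) :=
  ⨅ i, Module.End.eigenspace (degDer K A i : SerreAlgebra K A →ₗ[K] SerreAlgebra K A) (β i : K)

/-- The dimension of a weight space. -/
def mult (β : I → ℤ) : ℕ :=
  Module.finrank K (weightSpace K A β)

variable {K A}

theorem mem_weightSpace {β : I → ℤ} {x : SerreAlgebra K A} :
    x ∈ weightSpace K A β ↔ ∀ i, degDer K A i x = (β i : K) • x := by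
  simp [weightSpace, Submodule.mem_iInf]

theorem e_mem_weightSpace (i : I) : e K A i ∈ weightSpace K A (Pi.single i 1) :=
  mem_weightSpace.2 fun j => by simp [degDer, Pi.single_apply, eq_comm]

theorem lie_mem_weightSpace {β γ : I → ℤ} {x y : SerreAlgebra K A} (hx : x ∈ weightSpace K A β)
    (hy : y ∈ weightSpace K A γ) : ⁅x, y⁆ ∈ weightSpace K A (β + γ) :=
  mem_weightSpace.2 fun i => by
    rw [LieDerivation.apply_lie_eq_add, mem_weightSpace.1 hx, mem_weightSpace.1 hy, lie_smul,
      smul_lie, ← add_smul, Pi.add_apply, Int.cast_add, add_comm]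

theorem commute_degDer (i j : I) :
    Commute (degDer K A i : Module.End K (SerreAlgebra K A)) (degDer K A j : Module.End K _) :=
  LinearMap.ext fun x => diagDer_comm _ _ x

theorem word_mem_weightSpace (i : I) (l : List I) :
    word K A i l ∈ weightSpace K A ((i :: l).map fun k => Pi.single k 1).sum := by
  induction l with
  | nil => simpa [word] using e_mem_weightSpace i
  | cons k l ih =>
    rw [List.map_cons, List.sum_cons, List.map_cons, List.sum_cons, add_left_comm]
    rw [List.map_cons, List.sum_cons] at ih
    exact lie_mem_weightSpace (e_mem_weightSpace k) ih

theorem iSup_weightSpace : ⨆ β, weightSpace K A β = ⊤ :=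
  eq_top_iff.2 <| iSup_span_word.ge.trans <| iSup_le fun p => le_iSup_of_le _ <|
    (Submodule.span_singleton_le_iff_mem _ _).2 (word_mem_weightSpace p.1 p.2)

variable [CharZero K]

theorem intCast_comp_injective (K I : Type*) [Field K] [CharZero K] :
    Function.Injective fun (β : I → ℤ) (i : I) => (β i : K) :=
  fun _ _ h => funext fun i => Int.cast_injective (congrFun h i)

theorem iSupIndep_weightSpace : iSupIndep (weightSpace K A) :=
  (iSupIndep_iInf_eigenspace commute_degDer).comp (intCast_comp_injective K I)

theorem weightSpace_eq_span (β : I → ℤ) : weightSpace K A β =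
    Submodule.span K
      {x | ∃ i l, ((i :: l).map fun k => Pi.single k 1).sum = β ∧ word K A i l = x} := by
  rw [weightSpace, iInf_eigenspace_eq_iSup commute_degDer iSup_span_word (χ := fun p i =>
    ((((p.1 :: p.2).map fun k => Pi.single k 1).sum : I → ℤ) i : K)) fun p i =>
      (Submodule.span_singleton_le_iff_mem _ _).2 <|
        Module.End.mem_eigenspace_iff.2 (mem_weightSpace.1 (word_mem_weightSpace p.1 p.2) i)]
  refine le_antisymm (iSup₂_le fun p hp => Submodule.span_mono ?_) (Submodule.span_le.2 ?_)
  · rintro _ rfl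
    exact ⟨p.1, p.2, intCast_comp_injective K I hp, rfl⟩
  · rintro _ ⟨i, l, rfl, rfl⟩
    exact Submodule.mem_iSup_of_mem (i, l) (Submodule.mem_iSup_of_mem rfl
      (Submodule.mem_span_singleton_self _))

theorem pos_of_weightSpace_ne_bot {β : I → ℤ} (hβ : weightSpace K A β ≠ ⊥) : 0 < β := by
  contrapose! hβ
  rw [weightSpace_eq_span, Submodule.span_eq_bot]
  rintro _ ⟨i, l, rfl, -⟩
  refine absurd (lt_of_lt_of_le ?_ (List.single_le_sum ?_ _ (List.mem_cons_self ..))) hβ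
  · exact Pi.single_pos.2 one_pos
  · simp

theorem mult_eq_zero {β : I → ℤ} (hβ : ¬0 < β) : mult K A β = 0 := by
  rw [mult, not_not.1 (mt pos_of_weightSpace_ne_bot hβ), finrank_bot]

theorem sum_sum_map_single [Fintype I] (l : List I) :
    ∑ j, (l.map fun k => (Pi.single k 1 : I → ℤ)).sum j = l.length := by
  induction l with
  | nil => simp
  | cons k l ih => simp [Finset.sum_add_distrib, ih, add_comm]

theorem weight_pos (j : Σ β : I → ℤ, Fin (mult K A β)) : 0 < j.1 :=
  by_contra fun h => (Fin.cast (mult_eq_zero h) j.2).elim0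

section Finite

variable [Finite I]

theorem weightSpace_single (i : I) : weightSpace K A (Pi.single i 1) = K ∙ e K A i := by
  have := Fintype.ofFinite I
  refine le_antisymm ?_ ((Submodule.span_singleton_le_iff_mem _ _).2 (e_mem_weightSpace i))
  rw [weightSpace_eq_span, Submodule.span_le]
  rintro _ ⟨j, l, h, rfl⟩
  have hl := sum_sum_map_single (j :: l)
  rw [h] at hl
  obtain rfl : l = [] := by simpa using hl
  obtain rfl : j = i := by
    by_contra hji
    simpa [hji] using congrFun h j
  exact Submodule.mem_span_singleton_self _

instance finite_weightSpace (β : I → ℤ) : Module.Finite K (weightSpace K A β) := by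
  have := Fintype.ofFinite I
  rw [weightSpace_eq_span]
  refine Module.Finite.span_of_finite K <| ((Set.finite_univ.prod
    (List.finite_length_eq I ((∑ j, β j).toNat - 1))).image fun p => word K A p.1 p.2).subset ?_
  rintro _ ⟨i, l, rfl, rfl⟩
  exact ⟨(i, l), by rw [sum_sum_map_single]; simp, rfl⟩

theorem mult_single (i : I) : mult K A (Pi.single i 1) = 1 := by
  rw [mult, weightSpace_single]
  exact finrank_span_singleton (e_ne_zero i)

end Finite

variable [Fintype I]

variable (K A) in
/-- A basis of weight vectors; the first component of an index is the weight. -/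
def weightBasis : Module.Basis (Σ β : I → ℤ, Fin (mult K A β)) K (SerreAlgebra K A) :=
  (DirectSum.isInternal_submodule_of_iSupIndep_of_iSup_eq_top iSupIndep_weightSpace
    iSup_weightSpace).collectedBasis fun β => Module.finBasis K (weightSpace K A β)

theorem weightBasis_mem (j : Σ β : I → ℤ, Fin (mult K A β)) :
    weightBasis K A j ∈ weightSpace K A j.1 :=
  DirectSum.IsInternal.collectedBasis_mem _ _ _

theorem diagDer_weightBasis (a : I → K) (j : Σ β : I → ℤ, Fin (mult K A β)) :
    diagDer a (weightBasis K A j) = (∑ i, a i * j.1 i) • weightBasis K A j := by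
  rw [diagDer_apply_eq_sum, Finset.sum_smul]
  exact Finset.sum_congr rfl fun i _ => by
    rw [mem_weightSpace.1 (weightBasis_mem j), smul_smul]

end Weights

end SerreAlgebra

section SignedSubsetSums

variable {J M : Type*} [AddCommGroup M] [DecidableEq M] (deg : J → M)

/-- The number of even subsets of `F` of total degree `β` minus the number of odd ones, i.e. the
coefficient of `e ^ β` in `∏ j ∈ F, (1 - e ^ deg j)`. -/
def signedCount (F : Finset J) (β : M) : ℤ :=
  ∑ s ∈ F.powerset with ∑ j ∈ s, deg j = β, (-1) ^ s.card

theorem signedCount_insert [DecidableEq J] {F : Finset J} {k : J} (hk : k ∉ F) (β : M) :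
    signedCount deg (insert k F) β = signedCount deg F β - signedCount deg F (β - deg k) := by
  simp only [signedCount, Finset.sum_filter, Finset.sum_powerset_insert hk, sub_eq_add_neg,
    ← Finset.sum_neg_distrib]
  congr 1
  refine Finset.sum_congr rfl fun s hs => ?_
  have hks : k ∉ s := fun h => hk (Finset.mem_powerset.1 hs h)
  simp only [Finset.sum_insert hks, Finset.card_insert_of_notMem hks, pow_succ, mul_neg_one,
    ← sub_eq_add_neg, eq_sub_iff_add_eq', apply_ite Neg.neg, neg_zero]

variable {deg} {h : M →+ ℤ}

theorem signedCount_eq_zero_of_neg {F : Finset J} (hF : ∀ j ∈ F, 0 ≤ h (deg j)) {β : M}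
    (hβ : h β < 0) : signedCount deg F β = 0 := by
  rw [signedCount, Finset.filter_eq_empty_iff.2, Finset.sum_empty]
  rintro s hs rfl
  rw [map_sum] at hβ
  exact hβ.not_ge (Finset.sum_nonneg fun j hj => hF j (Finset.mem_powerset.1 hs hj))

theorem signedCount_zero {F : Finset J} (hF : ∀ j ∈ F, 0 < h (deg j)) :
    signedCount deg F 0 = 1 := by
  suffices hs : {s ∈ F.powerset | ∑ j ∈ s, deg j = 0} = {∅} by simp [signedCount, hs]
  ext s
  simp only [Finset.mem_filter, Finset.mem_powerset, Finset.mem_singleton]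
  refine ⟨fun ⟨hsF, hs⟩ => ?_, by rintro rfl; simp⟩
  by_contra hne
  have hpos := Finset.sum_pos (fun j hj => hF j (hsF hj)) (Finset.nonempty_iff_ne_empty.2 hne)
  rw [← map_sum, hs, map_zero] at hpos
  exact hpos.false

theorem mul_signedCount_eq_neg_sum_erase [DecidableEq J] (F : Finset J) (β : M) :
    h β * signedCount deg F β =
      -∑ j ∈ F, h (deg j) * signedCount deg (F.erase j) (β - deg j) := by
  induction F using Finset.induction_on generalizing β with
  | empty =>
    by_cases hβ : β = 0
    · simp [hβ]
    · simp [signedCount, Finset.filter_singleton, Ne.symm hβ]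
  | insert k F hk ih =>
    have herase : ∑ j ∈ F, h (deg j) * signedCount deg ((insert k F).erase j) (β - deg j) =
        ∑ j ∈ F, h (deg j) * signedCount deg (F.erase j) (β - deg j) -
          ∑ j ∈ F, h (deg j) * signedCount deg (F.erase j) (β - deg k - deg j) := by
      rw [← Finset.sum_sub_distrib]
      refine Finset.sum_congr rfl fun j hj => ?_
      rw [Finset.erase_insert_of_ne (ne_of_mem_of_not_mem hj hk).symm,
        signedCount_insert deg (mt Finset.mem_of_mem_erase hk), sub_right_comm, mul_sub]
    have hk' := ih (β - deg k)
    rw [map_sub, sub_mul] at hk'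
    rw [signedCount_insert deg hk, mul_sub, ih, Finset.sum_insert hk, Finset.erase_insert hk,
      herase]
    linear_combination -hk'

theorem sum_signedCount_sub_nsmul [DecidableEq J] {F : Finset J} {k : J} (hk : k ∈ F) (β : M)
    (N : ℕ) :
    ∑ n ∈ Finset.Icc 1 N, signedCount deg F (β - n • deg k) =
      signedCount deg (F.erase k) (β - deg k) -
        signedCount deg (F.erase k) (β - (N + 1) • deg k) := by
  induction N with
  | zero => simp
  | succ N ih =>
    conv_lhs => rw [Finset.sum_Icc_succ_top (by omega), ih, ← Finset.insert_erase hk,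
      signedCount_insert deg (Finset.notMem_erase k F)]
    rw [Finset.erase_insert (Finset.notMem_erase k F), succ_nsmul _ (N + 1), sub_sub]
    ring

theorem mul_signedCount_eq_neg_sum {F : Finset J} (hF : ∀ j ∈ F, 0 < h (deg j)) {β : M} {N : ℕ}
    (hN : h β ≤ N) :
    h β * signedCount deg F β =
      -∑ j ∈ F, ∑ n ∈ Finset.Icc 1 N, h (deg j) * signedCount deg F (β - n • deg j) := by
  classical
  rw [mul_signedCount_eq_neg_sum_erase]
  refine congrArg _ (Finset.sum_congr rfl fun j hj => ?_)
  have hneg : h (β - (N + 1) • deg j) < 0 := by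
    rw [map_sub, map_nsmul, nsmul_eq_mul]
    push_cast
    nlinarith [hF j hj]
  rw [← Finset.mul_sum, sum_signedCount_sub_nsmul hj, signedCount_eq_zero_of_neg
    (fun i hi => (hF i (Finset.mem_of_mem_erase hi)).le) hneg, sub_zero]

/-- The coefficient of `e ^ γ` in `∑ j ∈ F, h (deg j) * ∑ n ∈ [1, N], e ^ (n • deg j)`, the
logarithmic derivative of `∏ j ∈ F, (1 - e ^ deg j)⁻¹` truncated at `N`. -/
def weightedPowerSum (deg : J → M) (h : M →+ ℤ) (F : Finset J) (N : ℕ) (γ : M) : ℤ :=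
  ∑ p ∈ F ×ˢ Finset.Icc 1 N with p.2 • deg p.1 = γ, h (deg p.1)

theorem mul_signedCount_add_sum_eq_zero {F : Finset J} (hF : ∀ j ∈ F, 0 < h (deg j)) {β : M}
    {N : ℕ} (hN : h β ≤ N) {T : Finset M}
    (hT : ∀ j ∈ F, ∀ n ∈ Finset.Icc 1 N, β - n • deg j ∉ T →
      signedCount deg F (β - n • deg j) = 0) :
    h β * signedCount deg F β +
      ∑ μ ∈ T, signedCount deg F μ * weightedPowerSum deg h F N (β - μ) = 0 := by
  have hsum : ∑ μ ∈ T, signedCount deg F μ * weightedPowerSum deg h F N (β - μ) =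
      ∑ p ∈ F ×ˢ Finset.Icc 1 N, h (deg p.1) * signedCount deg F (β - p.2 • deg p.1) := by
    simp only [weightedPowerSum, Finset.sum_filter, Finset.mul_sum]
    rw [Finset.sum_comm]
    refine Finset.sum_congr rfl fun p hp => ?_
    rw [Finset.mem_product] at hp
    have hite (μ : M) : (signedCount deg F μ * if p.2 • deg p.1 = β - μ then h (deg p.1) else 0) =
        if β - p.2 • deg p.1 = μ then h (deg p.1) * signedCount deg F μ else 0 := by
      rw [mul_ite, mul_zero, mul_comm]
      exact if_congr (by rw [eq_sub_iff_add_eq', sub_eq_iff_eq_add, eq_comm]) rfl rfl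
    simp only [hite, Finset.sum_ite_eq]
    split_ifs with hmem
    · rfl
    · rw [hT p.1 hp.1 p.2 hp.2 hmem, mul_zero]
  rw [hsum, mul_signedCount_eq_neg_sum hF hN, Finset.sum_product, neg_add_cancel]

end SignedSubsetSums

section Height

variable {I : Type*}

theorem nsmul_eq_iff_eq_ediv {α γ : I → ℤ} {n : ℕ} (hn : n ≠ 0) :
    n • α = γ ↔ (∀ i, (n : ℤ) ∣ γ i) ∧ (fun i => γ i / n) = α := by
  have hn' : (n : ℤ) ≠ 0 := Nat.cast_ne_zero.2 hn
  simp only [funext_iff, ← forall_and]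
  exact forall_congr' fun i => by
    rw [Pi.smul_apply, nsmul_eq_mul]
    exact ⟨fun h => ⟨⟨_, h.symm⟩, Int.ediv_eq_of_eq_mul_right hn' h.symm⟩,
      fun ⟨h, h'⟩ => h' ▸ Int.mul_ediv_cancel' h⟩

variable [Fintype I]

/-- The height of a weight: the sum of its coordinates. -/
def height : (I → ℤ) →+ ℤ :=
  ∑ i, Pi.evalAddMonoidHom (fun _ => ℤ) i

theorem height_apply (β : I → ℤ) : height β = ∑ i, β i := by
  simp [height]

theorem height_mono {β γ : I → ℤ} (h : β ≤ γ) : height β ≤ height γ := by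
  rw [height_apply, height_apply]
  exact Finset.sum_le_sum fun i _ => h i

theorem height_pos {β : I → ℤ} (hβ : 0 < β) : 0 < height β := by
  obtain ⟨hnonneg, i, hi⟩ := Pi.lt_def.1 hβ
  rw [height_apply]
  exact Finset.sum_pos' (fun i _ => hnonneg i) ⟨i, Finset.mem_univ i, hi⟩

end Height

namespace SerreAlgebra

variable (K : Type*) [Field K] [CharZero K] {I : Type*} [Fintype I] [DecidableEq I]
  (A : Matrix I I ℤ) (B : I → ℤ)

/-- The indices of the basis vectors of weight at most `B`. -/
def weightBasisBox : Finset (Σ β : I → ℤ, Fin (mult K A β)) :=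
  (Finset.Icc 0 B).sigma fun _ => Finset.univ

/-- The coefficient of `e ^ β` in `∏ α ≤ B, (1 - e ^ α) ^ mult α`. -/
def denominatorCoeff (β : I → ℤ) : ℤ :=
  signedCount Sigma.fst (weightBasisBox K A B) β

/-- The sum of `height α * mult α` over all `α` and `n ≥ 1` with `n • α = γ`, for `γ ≤ B`. -/
def heightMultSum (γ : I → ℤ) : ℤ :=
  weightedPowerSum Sigma.fst height (weightBasisBox K A B) (height B).toNat γ

variable {K A B}

theorem mem_weightBasisBox {j : Σ β : I → ℤ, Fin (mult K A β)} :
    j ∈ weightBasisBox K A B ↔ j.1 ≤ B := by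
  simp [weightBasisBox, (weight_pos j).le]

theorem denominatorCoeff_zero : denominatorCoeff K A B 0 = 1 :=
  signedCount_zero (h := height) fun j _ => height_pos (weight_pos j)

theorem denominatorCoeff_eq_zero_of_not_nonneg {β : I → ℤ} (hβ : ¬0 ≤ β) :
    denominatorCoeff K A B β = 0 := by
  obtain ⟨i, hi⟩ := not_forall.1 hβ
  exact signedCount_eq_zero_of_neg (h := Pi.evalAddMonoidHom (fun _ => ℤ) i)
    (fun j _ => (weight_pos j).le i) (not_le.1 hi)

theorem mem_filter_weightBasisBox {β : I → ℤ} (hβ : β ≤ B)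
    {s : Finset (Σ β : I → ℤ, Fin (mult K A β))} :
    s ∈ {s ∈ (weightBasisBox K A B).powerset | ∑ j ∈ s, j.1 = β} ↔ ∑ j ∈ s, j.1 = β := by
  rw [Finset.mem_filter, Finset.mem_powerset, and_iff_right_iff_imp]
  rintro rfl j hj
  exact mem_weightBasisBox.2 <|
    (Finset.single_le_sum (f := Sigma.fst) (fun k _ => (weight_pos k).le) hj).trans hβ

-- The Laplacian acts on the chains of weight `β` by a nonzero scalar, so their Euler
-- characteristic vanishes.
theorem denominatorCoeff_eq_zero (hA : IsGCM A) {d : I → K} (hd : (symmetrization d A).IsSymm)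
    {β : I → ℤ} (hβ : β ≤ B)
    (hne : ∑ i, ∑ j, symmetrization d A i j * (β i * β j) ≠ ∑ i, 2 * d i * β i) :
    denominatorCoeff K A B β = 0 := by
  classical
  let _ : LinearOrder (Σ β : I → ℤ, Fin (mult K A β)) := linearOrderOfSTO WellOrderingRel
  obtain ⟨δ, hδ, hδ_diagDer, hlaplacian⟩ := exists_codifferential hA hd
  set q : K := ∑ i, ∑ j, symmetrization d A i j * (β i * β j) - ∑ i, 2 * d i * β i
  have hS (s : Finset (Σ β : I → ℤ, Fin (mult K A β))) :
      s ∈ {s ∈ (weightBasisBox K A B).powerset | ∑ j ∈ s, j.1 = β} ↔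
        ∀ i, ∑ j ∈ s, (j.1 i : K) = β i := by
    rw [mem_filter_weightBasisBox hβ, funext_iff]
    exact forall_congr' fun i => by rw [Finset.sum_apply, ← Int.cast_sum, Int.cast_inj]
  have hdiag (a : I → K) (s) (hs : s ∈ {s ∈ (weightBasisBox K A B).powerset | ∑ j ∈ s, j.1 = β}) :
      wedgeDer (diagDer (A := A) a : SerreAlgebra K A →ₗ[K] _)
          ((weightBasis K A).ExteriorAlgebra s) =
        (∑ i, a i * β i) • (weightBasis K A).ExteriorAlgebra s := by
    rw [wedgeDer_exteriorAlgebra_basis _ (diagDer_weightBasis a), Finset.sum_comm]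
    simp only [← Finset.mul_sum, (hS s).1 hs]
  have hdeg (i : I) (s) (hs : s ∈ {s ∈ (weightBasisBox K A B).powerset | ∑ j ∈ s, j.1 = β}) :
      wedgeDer (degDer K A i : SerreAlgebra K A →ₗ[K] _) ((weightBasis K A).ExteriorAlgebra s) =
        (β i : K) • (weightBasis K A).ExteriorAlgebra s := by
    simpa [degDer, Pi.single_apply] using hdiag (Pi.single i 1) s hs
  have hsum := sum_neg_one_pow_card_eq_zero (weightBasis K A) (D := degDer K A)
    (fun i j => mem_weightSpace.1 (weightBasis_mem j) i) (hδ := hδ)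
    (fun i => hδ_diagDer (Pi.single i 1)) hS (q := 2⁻¹ * q)
    (mul_ne_zero (inv_ne_zero two_ne_zero) (sub_ne_zero.2 hne)) fun s hs => by
      rw [mul_smul, eq_inv_smul_iff₀ two_ne_zero, ← LinearMap.smul_apply, hlaplacian,
        exteriorCasimir_apply, hdiag _ s hs, sub_smul, Finset.sum_smul]
      simp only [hdeg _ s hs, map_smul, smul_smul, Finset.sum_smul, mul_comm]
  rw [denominatorCoeff, signedCount]
  exact_mod_cast hsum

theorem height_mul_denominatorCoeff_add_sum_eq_zero {β : I → ℤ} (hβ : β ≤ B) {T : Finset (I → ℤ)}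
    (hT : ∀ μ ≤ β, μ ∉ T → denominatorCoeff K A B μ = 0) :
    height β * denominatorCoeff K A B β +
      ∑ μ ∈ T, denominatorCoeff K A B μ * heightMultSum K A B (β - μ) = 0 :=
  mul_signedCount_add_sum_eq_zero (fun j _ => height_pos (weight_pos j))
    ((height_mono hβ).trans (Int.self_le_toNat _)) fun j _ n _ =>
      hT _ (sub_le_self _ (nsmul_nonneg (weight_pos j).le n))

theorem heightMultSum_eq {γ : I → ℤ} (hγ : γ ≤ B) : heightMultSum K A B γ =
    ∑ n ∈ Finset.Icc 1 (height B).toNat with ∀ i, ((n : ℕ) : ℤ) ∣ γ i,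
      height (fun i => γ i / n) * mult K A fun i => γ i / n := by
  rw [heightMultSum, weightedPowerSum, Finset.sum_filter, Finset.sum_product_right,
    Finset.sum_filter]
  refine Finset.sum_congr rfl fun n hn => ?_
  have hn : 1 ≤ n := (Finset.mem_Icc.1 hn).1
  simp only [weightBasisBox, Finset.sum_sigma, Finset.sum_const, Finset.card_univ, Fintype.card_fin,
    nsmul_eq_iff_eq_ediv (Nat.ne_of_gt hn), smul_ite, smul_zero, ite_and]
  split_ifs with hdvd
  · rw [Finset.sum_ite_eq]
    split_ifs with hmem
    · rw [nsmul_eq_mul, mul_comm]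
    · rw [mult_eq_zero, Nat.cast_zero, mul_zero]
      refine fun hpos => hmem (Finset.mem_Icc.2 ⟨hpos.le, fun i => ?_⟩)
      refine (le_mul_of_one_le_left (hpos.le i) (Nat.one_le_cast.2 hn)).trans ?_
      exact (Int.mul_ediv_cancel' (hdvd i)).trans_le (hγ i)
  · simp

theorem heightMultSum_eq_zero {γ : I → ℤ} (hγB : γ ≤ B) (hγ : ¬0 < γ) :
    heightMultSum K A B γ = 0 := by
  rw [heightMultSum_eq hγB]
  refine Finset.sum_eq_zero fun n hn => ?_
  obtain ⟨hn, hdvd⟩ := Finset.mem_filter.1 hn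
  have hn : n ≠ 0 := Nat.ne_of_gt (Finset.mem_Icc.1 hn).1
  rw [mult_eq_zero, Nat.cast_zero, mul_zero]
  exact fun hpos => hγ <| (nsmul_eq_iff_eq_ediv hn).2 ⟨hdvd, rfl⟩ ▸ nsmul_pos hpos hn

theorem heightMultSum_eq_sum_divisors {γ : I → ℤ} (hγ : 0 < γ) (hγB : γ ≤ B) {g : ℕ}
    (hg : ∀ n : ℕ, n ∣ g ↔ ∀ i, (n : ℤ) ∣ γ i) : heightMultSum K A B γ =
      ∑ n ∈ g.divisors, height (fun i => γ i / n) * mult K A fun i => γ i / n := by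
  obtain ⟨hnonneg, i, hi⟩ := Pi.lt_def.1 hγ
  have hle (n : ℕ) (hn : n ∣ g) : n ≤ (height B).toNat := by
    have hγi : γ i ≤ height γ := by
      rw [height_apply]
      exact Finset.single_le_sum (fun j _ => hnonneg j) (Finset.mem_univ i)
    have hnγ : (n : ℤ) ≤ γ i := Int.le_of_dvd hi ((hg n).1 hn i)
    have hγB := height_mono hγB
    omega
  have hg0 : g ≠ 0 := by
    rintro rfl
    exact hi.ne' (Int.natCast_zero ▸ (hg 0).1 dvd_rfl i |> zero_dvd_iff.1)
  rw [heightMultSum_eq hγB]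
  refine Finset.sum_congr (Finset.ext fun n => ?_) fun _ _ => rfl
  rw [Finset.mem_filter, Finset.mem_Icc, Nat.mem_divisors, ← hg]
  exact ⟨fun h => ⟨h.2, hg0⟩,
    fun h => ⟨⟨Nat.pos_of_ne_zero (ne_zero_of_dvd_ne_zero hg0 h.1), hle n h.1⟩, h.1⟩⟩

theorem heightMultSum_fin_two {A : Matrix (Fin 2) (Fin 2) ℤ} {B : Fin 2 → ℤ} {m n : ℤ}
    (hm : 0 ≤ m) (hn : 0 ≤ n) (hmB : m ≤ B 0) (hnB : n ≤ B 1) :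
    heightMultSum K A B ![m, n] =
      ∑ k ∈ (Int.gcd m n).divisors, (m / k + n / k) * mult K A ![m / k, n / k] := by
  have hB : ![m, n] ≤ B := Pi.le_def.2 <| Fin.forall_fin_two.2 ⟨hmB, hnB⟩
  have hnonneg : 0 ≤ ![m, n] := Pi.le_def.2 <| Fin.forall_fin_two.2 ⟨hm, hn⟩
  have hdiv (k : ℕ) : (fun i => ![m, n] i / (k : ℤ)) = ![m / k, n / k] :=
    funext fun i => by fin_cases i <;> rfl
  by_cases hpos : 0 < ![m, n]
  · rw [heightMultSum_eq_sum_divisors hpos hB fun k => by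
      rw [Fin.forall_fin_two]; exact Int.dvd_gcd_iff]
    simp only [hdiv, height_apply, Fin.sum_univ_two, Matrix.cons_val_zero, Matrix.cons_val_one]
  · obtain ⟨rfl, rfl⟩ : m = 0 ∧ n = 0 := by
      simpa [funext_iff, Fin.forall_fin_two, eq_comm] using hnonneg.eq_of_not_lt hpos
    rw [heightMultSum_eq_zero hB hpos, Int.gcd_self, Int.natAbs_zero, Nat.divisors_zero,
      Finset.sum_empty]

end SerreAlgebra

section Elimination

variable {R L : Type*} [CommRing R] [LieRing L] [LieAlgebra R L]

theorem lieSpan_toSubmodule_le_span {s t : Set L} (hst : s ⊆ Submodule.span R t)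
    (ht : ∀ x ∈ t, ∀ y ∈ t, ⁅x, y⁆ ∈ Submodule.span R t) :
    (LieSubalgebra.lieSpan R L s).toSubmodule ≤ Submodule.span R t := by
  let P : LieSubalgebra R L :=
    { Submodule.span R t with
      lie_mem' := fun {x y} hx hy => LinearMap.BilinMap.apply_apply_mem_of_mem_span _ t t
        (LieModule.toEnd R L L : L →ₗ[R] Module.End R L) ht x y hx hy }
  exact show LieSubalgebra.lieSpan R L s ≤ P from LieSubalgebra.lieSpan_le.2 hst

theorem lie_mem_lieSpan_range_ad_pow (x y : L) {z : L}
    (hz : z ∈ LieSubalgebra.lieSpan R L (Set.range fun n => (LieAlgebra.ad R L x ^ n) y)) :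
    ⁅x, z⁆ ∈ LieSubalgebra.lieSpan R L (Set.range fun n => (LieAlgebra.ad R L x ^ n) y) := by
  induction hz using LieSubalgebra.lieSpan_induction with
  | mem z hz =>
    obtain ⟨n, rfl⟩ := hz
    exact LieSubalgebra.subset_lieSpan ⟨n + 1, by simp only [pow_succ']; rfl⟩
  | zero => rw [lie_zero]; exact zero_mem _
  | add z w _ _ hz hw => rw [lie_add]; exact add_mem hz hw
  | smul r z _ hz => rw [lie_smul]; exact LieSubalgebra.smul_mem _ r hz
  | lie z w hz hw hxz hxw =>
    rw [leibniz_lie]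
    exact add_mem (LieSubalgebra.lie_mem _ hxz hw) (LieSubalgebra.lie_mem _ hz hxw)

theorem span_singleton_sup_lieSpan_range_ad_pow {x y : L}
    (hxy : LieSubalgebra.lieSpan R L {x, y} = ⊤) :
    (R ∙ x) ⊔ (LieSubalgebra.lieSpan R L
      (Set.range fun n => (LieAlgebra.ad R L x ^ n) y)).toSubmodule = ⊤ := by
  set P := LieSubalgebra.lieSpan R L (Set.range fun n => (LieAlgebra.ad R L x ^ n) y)
  have hy : y ∈ P := LieSubalgebra.subset_lieSpan ⟨0, rfl⟩
  have hle : P.toSubmodule ≤ (R ∙ x) ⊔ P.toSubmodule := le_sup_right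
  refine submodule_eq_top_of_lie_mem hxy (Set.pair_subset_iff.2
    ⟨Submodule.mem_sup_left (Submodule.mem_span_singleton_self x), hle hy⟩) ?_
  rintro u hu v hv
  obtain ⟨w, hw, z, hz, rfl⟩ := Submodule.mem_sup.1 hv
  obtain ⟨c, rfl⟩ := Submodule.mem_span_singleton.1 hw
  obtain rfl | rfl := hu
  · rw [lie_add, lie_smul, lie_self, smul_zero, zero_add]
    exact hle (lie_mem_lieSpan_range_ad_pow u y hz)
  · rw [lie_add, lie_smul, ← lie_skew u x]
    exact hle <| add_mem (P.smul_mem c (neg_mem (lie_mem_lieSpan_range_ad_pow x u hy)))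
      (P.lie_mem hy hz)

end Elimination

namespace SerreAlgebra

variable {K : Type*} [Field K] {I : Type*} {A : Matrix I I ℤ} {i j : I}

theorem ad_e_pow_e_eq_zero (hij : i ≠ j) {n : ℕ} (hn : (-A i j).toNat < n) :
    (LieAlgebra.ad K _ (e K A i) ^ n) (e K A j) = 0 := by
  obtain ⟨m, rfl⟩ := Nat.exists_eq_add_of_lt hn
  rw [add_right_comm, add_comm, pow_add, Module.End.mul_apply, ad_e_pow_e K A hij, map_zero]

variable [DecidableEq I]

theorem ad_e_pow_e_mem_weightSpace (i j : I) (n : ℕ) :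
    (LieAlgebra.ad K _ (e K A i) ^ n) (e K A j) ∈
      weightSpace K A (n • Pi.single i 1 + Pi.single j 1) := by
  induction n with
  | zero => simpa using e_mem_weightSpace j
  | succ n ih =>
    rw [pow_succ', succ_nsmul', add_assoc]
    exact lie_mem_weightSpace (e_mem_weightSpace i) ih

-- The last nonzero vector of the string commutes with itself, and all its other brackets have
-- smaller slope `β i / β j`.
theorem lieSpan_range_ad_e_pow_e_le (hij : i ≠ j) :
    (LieSubalgebra.lieSpan K _
      (Set.range fun n => (LieAlgebra.ad K _ (e K A i) ^ n) (e K A j))).toSubmodule ≤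
    Submodule.span K ({x | ∃ β : I → ℤ, β i < (-A i j).toNat * β j ∧ x ∈ weightSpace K A β} ∪
      {(LieAlgebra.ad K _ (e K A i) ^ (-A i j).toNat) (e K A j)}) := by
  set a := (-A i j).toNat
  have hstring (n : ℕ) : (n • Pi.single i 1 + Pi.single j 1 : I → ℤ) i = n ∧
      (n • Pi.single i 1 + Pi.single j 1 : I → ℤ) j = 1 := by
    simp [hij, hij.symm]
  obtain ⟨α, hαi, hαj, ha⟩ : ∃ α : I → ℤ, α i = a ∧ α j = 1 ∧
      (LieAlgebra.ad K _ (e K A i) ^ a) (e K A j) ∈ weightSpace K A α :=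
    ⟨_, (hstring a).1, (hstring a).2, ad_e_pow_e_mem_weightSpace i j a⟩
  refine lieSpan_toSubmodule_le_span ?_ ?_
  · rintro _ ⟨n, rfl⟩
    obtain hn | rfl | hn := lt_trichotomy n a
    · refine Submodule.subset_span (.inl ⟨_, ?_, ad_e_pow_e_mem_weightSpace i j n⟩)
      rw [(hstring n).1, (hstring n).2, mul_one]
      exact_mod_cast hn
    · exact Submodule.subset_span (.inr rfl)
    · simp only [ad_e_pow_e_eq_zero hij hn, SetLike.mem_coe, zero_mem]
  · rintro x (⟨β, hβ, hx⟩ | rfl) y (⟨γ, hγ, hy⟩ | rfl)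
    · refine Submodule.subset_span (.inl ⟨_, ?_, lie_mem_weightSpace hx hy⟩)
      simp only [Pi.add_apply]
      linarith
    · refine Submodule.subset_span (.inl ⟨_, ?_, lie_mem_weightSpace hx ha⟩)
      rw [Pi.add_apply, Pi.add_apply, hαi, hαj]
      linarith
    · refine Submodule.subset_span (.inl ⟨_, ?_, lie_mem_weightSpace ha hy⟩)
      rw [Pi.add_apply, Pi.add_apply, hαi, hαj]
      linarith
    · rw [lie_self]
      exact zero_mem _

theorem mult_eq_zero_of_le [CharZero K] (hij : i ≠ j) (hI : ∀ k, k = i ∨ k = j) {β : I → ℤ}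
    (hi : β ≠ Pi.single i 1) (ha : β ≠ (-A i j).toNat • Pi.single i 1 + Pi.single j 1)
    (hβ : (-A i j).toNat * β j ≤ β i) : mult K A β = 0 := by
  have hgen : LieSubalgebra.lieSpan K (SerreAlgebra K A) {e K A i, e K A j} = ⊤ := by
    rw [← lieSpan_range_e, ← Set.image_univ, ← Set.image_pair]
    congr
    exact (Set.eq_univ_of_forall hI)
  have htop := (span_singleton_sup_lieSpan_range_ad_pow hgen).ge.trans
    (sup_le_sup_left (lieSpan_range_ad_e_pow_e_le hij) _)
  have hle : ⨆ (γ) (_ : γ ≠ β), weightSpace K A γ = ⊤ := by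
    refine top_le_iff.1 (htop.trans (sup_le ?_ (Submodule.span_le.2 ?_)))
    · exact (Submodule.span_singleton_le_iff_mem _ _).2
        (Submodule.mem_iSup_of_mem _ (Submodule.mem_iSup_of_mem hi.symm (e_mem_weightSpace i)))
    · rintro x (⟨γ, hγ, hx⟩ | rfl)
      · exact Submodule.mem_iSup_of_mem γ (Submodule.mem_iSup_of_mem
          (by rintro rfl; exact hβ.not_gt hγ) hx)
      · exact Submodule.mem_iSup_of_mem _
          (Submodule.mem_iSup_of_mem ha.symm (ad_e_pow_e_mem_weightSpace i j _))
  have hbot := iSupIndep_weightSpace (K := K) (A := A) β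
  rw [hle, disjoint_top] at hbot
  rw [mult, hbot, finrank_bot]

end SerreAlgebra

theorem isGCM_A2hyp : IsGCM A2hyp := by
  simp [IsGCM, Fin.forall_fin_two, A2hyp]

theorem isSymm_symmetrization_A2hyp (K : Type*) [Field K] :
    (symmetrization (fun _ => (1 : K)) A2hyp).IsSymm := by
  ext i j
  fin_cases i <;> fin_cases j <;> rfl

/-- The coefficients `(-1) ^ ℓ(w)` of `e ^ (ρ - w ρ)` in the Weyl denominator of `A2hyp`, for
`ρ - w ρ ≤ ![12, 12]`. -/
def hypCoeff (β : Fin 2 → ℤ) : ℤ :=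
  if β ∈ ({0, ![4, 1], ![1, 4]} : Finset (Fin 2 → ℤ)) then 1
  else if β ∈ ({![1, 0], ![0, 1], ![12, 4], ![4, 12]} : Finset (Fin 2 → ℤ)) then -1
  else 0

/-- The support of `hypCoeff`. -/
def hypSupport : Finset (Fin 2 → ℤ) :=
  {0, ![1, 0], ![0, 1], ![4, 1], ![1, 4], ![12, 4], ![4, 12]}

theorem nonneg_of_mem_hypSupport {μ : Fin 2 → ℤ} (hμ : μ ∈ hypSupport) : 0 ≤ μ :=
  Pi.le_def.2 <| (by decide : ∀ μ ∈ hypSupport, ∀ i, 0 ≤ μ i) μ hμ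

theorem hypCoeff_eq_zero {β : Fin 2 → ℤ} (hβ : β ∉ hypSupport) : hypCoeff β = 0 := by
  simp_all [hypCoeff, hypSupport]

/-- The values of `heightMultSum` for `A2hyp` at the weights `![m, n]` and `![n, m]` with
`n ≤ m ≤ 12`. -/
def hypTable : List (List ℤ) :=
  [[0],
    [1, 2],
    [1, 3, 6],
    [1, 4, 10, 20],
    [1, 0, 9, 28, 54],
    [1, 0, 7, 32, 81, 162],
    [1, 0, 4, 30, 100, 253, 492],
    [1, 0, 0, 20, 99, 324, 780, 1500],
    [1, 0, 0, 11, 81, 351, 1050, 2430, 4662],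
    [1, 0, 0, 4, 52, 322, 1210, 3376, 7633, 14564],
    [1, 0, 0, 0, 21, 243, 1200, 4080, 10881, 24073, 45726],
    [1, 0, 0, 0, 0, 144, 1020, 4320, 13680, 35080, 76230, 144300],
    [1, 0, 0, 0, 4, 68, 738, 4009, 15260, 45535, 113113, 242213, 457068]]

/-- The entry of `hypTable` at a weight, extended by zero. -/
def hypHeightMultSum (γ : Fin 2 → ℤ) : ℤ :=
  if ∀ i, 0 ≤ γ i then
    (hypTable.getD (max (γ 0) (γ 1)).toNat []).getD (min (γ 0) (γ 1)).toNat 0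
  else 0

theorem hypHeightMultSum_recursion : ∀ β ∈ Finset.Icc 0 ![12, 12],
    height β * hypCoeff β + hypHeightMultSum β +
      ∑ μ ∈ hypSupport.erase 0, hypCoeff μ * hypHeightMultSum (β - μ) = 0 := by
  decide +kernel

theorem mem_hypSupport_of_quadratic_eq : ∀ β ∈ Finset.Icc 0 ![12, 12],
    ∑ i, ∑ j, A2hyp i j * (β i * β j) = ∑ i, 2 * β i → β ∈ hypSupport := by
  decide +kernel

namespace SerreAlgebra

variable {K : Type*} [Field K] [CharZero K]

theorem denominatorCoeff_A2hyp_eq_zero {μ : Fin 2 → ℤ} (hμ : μ ≤ ![12, 12])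
    (hμT : μ ∉ hypSupport) : denominatorCoeff K A2hyp ![12, 12] μ = 0 := by
  by_cases hμ0 : 0 ≤ μ
  · refine denominatorCoeff_eq_zero isGCM_A2hyp (isSymm_symmetrization_A2hyp K) hμ fun h => hμT ?_
    refine mem_hypSupport_of_quadratic_eq μ (Finset.mem_Icc.2 ⟨hμ0, hμ⟩) ?_
    simp only [symmetrization, Matrix.of_apply, one_mul, mul_one] at h
    exact_mod_cast h
  · exact denominatorCoeff_eq_zero_of_not_nonneg hμ0

theorem mult_A2hyp_eq_zero {m n : ℤ} (h : 3 * n ≤ m) (hmn : ![m, n] ≠ ![1, 0])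
    (hmn' : ![m, n] ≠ ![3, 1]) : mult K A2hyp ![m, n] = 0 ∧ mult K A2hyp ![n, m] = 0 := by
  simp only [ne_eq, Matrix.vecCons_inj, and_true, not_and] at hmn hmn'
  constructor
  · refine mult_eq_zero_of_le (i := 0) (j := 1) (by decide) (by decide) ?_ ?_ (by simpa [A2hyp])
    all_goals simpa [A2hyp, funext_iff, Fin.forall_fin_two]
  · refine mult_eq_zero_of_le (i := 1) (j := 0) (by decide) (by decide) ?_ ?_ (by simpa [A2hyp])
    · simpa [A2hyp, funext_iff, Fin.forall_fin_two] using imp_not_comm.1 hmn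
    · simpa [A2hyp, funext_iff, Fin.forall_fin_two] using imp_not_comm.1 hmn'

theorem heightMultSum_A2hyp_support :
    heightMultSum K A2hyp ![12, 12] ![1, 0] = 1 ∧
    heightMultSum K A2hyp ![12, 12] ![0, 1] = 1 ∧
    heightMultSum K A2hyp ![12, 12] ![4, 1] = 0 ∧
    heightMultSum K A2hyp ![12, 12] ![1, 4] = 0 ∧
    heightMultSum K A2hyp ![12, 12] ![12, 4] = heightMultSum K A2hyp ![12, 12] ![3, 1] ∧
    heightMultSum K A2hyp ![12, 12] ![4, 12] = heightMultSum K A2hyp ![12, 12] ![1, 3] := by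
  have h10 : mult K A2hyp ![1, 0] = 1 := by
    rw [show (![1, 0] : Fin 2 → ℤ) = Pi.single 0 1 by decide, mult_single]
  have h01 : mult K A2hyp ![0, 1] = 1 := by
    rw [show (![0, 1] : Fin 2 → ℤ) = Pi.single 1 1 by decide, mult_single]
  have h41 := mult_A2hyp_eq_zero (K := K) (m := 4) (n := 1) (by decide) (by decide) (by decide)
  have h62 := mult_A2hyp_eq_zero (K := K) (m := 6) (n := 2) (by decide) (by decide) (by decide)
  have h124 := mult_A2hyp_eq_zero (K := K) (m := 12) (n := 4) (by decide) (by decide) (by decide)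
  have hdiv : Nat.divisors 4 = {1, 2, 4} := rfl
  refine ⟨?_, ?_, ?_, ?_, ?_, ?_⟩ <;> repeat rw [heightMultSum_fin_two]
  all_goals norm_num [hdiv, h41, h62, h124, h10, h01]

theorem hypHeightMultSum_eq_zero {γ : Fin 2 → ℤ} (hγ : ¬0 < γ) : hypHeightMultSum γ = 0 := by
  by_cases h0 : 0 ≤ γ
  · rw [← h0.eq_of_not_lt hγ]; rfl
  · exact if_neg h0

theorem height_mul_denominatorCoeff_add_heightMultSum_A2hyp {β : Fin 2 → ℤ}
    (hβ : β ∈ Finset.Icc 0 ![12, 12])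
    (ih : ∀ γ ∈ Finset.Icc (0 : Fin 2 → ℤ) ![12, 12], height γ < height β →
      denominatorCoeff K A2hyp ![12, 12] γ = hypCoeff γ ∧
        heightMultSum K A2hyp ![12, 12] γ = hypHeightMultSum γ) :
    height β * denominatorCoeff K A2hyp ![12, 12] β + heightMultSum K A2hyp ![12, 12] β =
      height β * hypCoeff β + hypHeightMultSum β := by
  have hβB : β ≤ ![12, 12] := (Finset.mem_Icc.1 hβ).2
  have hrec := height_mul_denominatorCoeff_add_sum_eq_zero (K := K) (A := A2hyp) hβB
    fun μ hμ => denominatorCoeff_A2hyp_eq_zero (hμ.trans hβB)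
  rw [← Finset.add_sum_erase hypSupport _ (by decide : 0 ∈ hypSupport), denominatorCoeff_zero,
    one_mul, sub_zero, ← add_assoc] at hrec
  have hsum : ∑ μ ∈ hypSupport.erase 0, denominatorCoeff K A2hyp ![12, 12] μ *
      heightMultSum K A2hyp ![12, 12] (β - μ) =
      ∑ μ ∈ hypSupport.erase 0, hypCoeff μ * hypHeightMultSum (β - μ) := by
    refine Finset.sum_congr rfl fun μ hμ => ?_
    have hμ0 : 0 < μ :=
      (nonneg_of_mem_hypSupport (Finset.mem_of_mem_erase hμ)).lt_of_ne' (Finset.ne_of_mem_erase hμ)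
    have hβμB : β - μ ≤ ![12, 12] := (sub_le_self _ hμ0.le).trans hβB
    by_cases hβμ : 0 < β - μ
    · have hμβ : height μ < height β := sub_pos.1 <| map_sub height β μ ▸ height_pos hβμ
      have hβμβ : height (β - μ) < height β :=
        map_sub height β μ ▸ sub_lt_self _ (height_pos hμ0)
      rw [(ih μ (Finset.mem_Icc.2 ⟨hμ0.le, (sub_pos.1 hβμ).le.trans hβB⟩) hμβ).1,
        (ih (β - μ) (Finset.mem_Icc.2 ⟨hβμ.le, hβμB⟩) hβμβ).2]
    · rw [hypHeightMultSum_eq_zero hβμ, heightMultSum_eq_zero hβμB hβμ, mul_zero, mul_zero]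
  linarith [hypHeightMultSum_recursion β hβ]

theorem heightMultSum_A2hyp_of_mem_hypSupport {β : Fin 2 → ℤ} (hβ : β ∈ hypSupport)
    (ih : ∀ γ ∈ Finset.Icc (0 : Fin 2 → ℤ) ![12, 12], height γ < height β →
      heightMultSum K A2hyp ![12, 12] γ = hypHeightMultSum γ) :
    heightMultSum K A2hyp ![12, 12] β = hypHeightMultSum β := by
  obtain ⟨h10, h01, h41, h14, h124, h412⟩ := heightMultSum_A2hyp_support (K := K)
  simp only [hypSupport, Finset.mem_insert, Finset.mem_singleton] at hβ
  rcases hβ with rfl | rfl | rfl | rfl | rfl | rfl | rfl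
  · exact heightMultSum_eq_zero (B := ![12, 12]) (by simp [Pi.le_def]) (lt_irrefl 0)
  · exact h10
  · exact h01
  · exact h41
  · exact h14
  · exact h124.trans (ih ![3, 1] (by decide) (by decide))
  · exact h412.trans (ih ![1, 3] (by decide) (by decide))

theorem denominatorCoeff_and_heightMultSum_A2hyp {β : Fin 2 → ℤ}
    (hβ : β ∈ Finset.Icc 0 ![12, 12]) :
    denominatorCoeff K A2hyp ![12, 12] β = hypCoeff β ∧
      heightMultSum K A2hyp ![12, 12] β = hypHeightMultSum β := by
  induction hn : (height β).toNat using Nat.strong_induction_on generalizing β with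
  | _ n ihn =>
    obtain ⟨hβ0, hβB⟩ := Finset.mem_Icc.1 hβ
    have ih (γ : Fin 2 → ℤ) (hγ : γ ∈ Finset.Icc (0 : Fin 2 → ℤ) ![12, 12])
        (hlt : height γ < height β) := by
      have hpos := height_mono (Finset.mem_Icc.1 hγ).1
      rw [map_zero] at hpos
      exact ihn _ (by omega) hγ rfl
    have hrec := height_mul_denominatorCoeff_add_heightMultSum_A2hyp (K := K) hβ ih
    by_cases hT : β ∈ hypSupport
    · have hS := heightMultSum_A2hyp_of_mem_hypSupport (K := K) hT fun γ hγ h => (ih γ hγ h).2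
      refine ⟨?_, hS⟩
      rcases hβ0.eq_or_lt with rfl | hpos
      · exact denominatorCoeff_zero
      · rw [hS] at hrec
        exact mul_left_cancel₀ (height_pos hpos).ne' (add_right_cancel hrec)
    · have hε := denominatorCoeff_A2hyp_eq_zero (K := K) hβB hT
      have hc := hypCoeff_eq_zero hT
      rw [hε, hc] at hrec
      exact ⟨hε.trans hc.symm, add_left_cancel hrec⟩

/-- The multiplicities of the weights `![m, m]` for `A2hyp`, with `m ≤ 12`. -/
def hypDiagonalMult : List ℤ := [0, 1, 1, 3, 6, 16, 39, 107, 288, 808, 2278, 6559, 19022]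

theorem hypHeightMultSum_diagonal : ∀ m ∈ Finset.Icc 1 12, hypHeightMultSum ![(m : ℕ), m] =
    ∑ d ∈ m.divisors, 2 * d * hypDiagonalMult.getD d 0 := by
  decide +kernel

theorem heightMultSum_diagonal {A : Matrix (Fin 2) (Fin 2) ℤ} {B : Fin 2 → ℤ} {m : ℕ}
    (hm0 : (m : ℤ) ≤ B 0) (hm1 : (m : ℤ) ≤ B 1) : heightMultSum K A B ![m, m] =
      ∑ d ∈ m.divisors, 2 * (d : ℤ) * mult K A ![d, d] := by
  rw [heightMultSum_fin_two m.cast_nonneg m.cast_nonneg hm0 hm1, Int.gcd_self, Int.natAbs_natCast,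
    ← Nat.sum_div_divisors m fun d : ℕ => 2 * (d : ℤ) * mult K A ![d, d]]
  refine Finset.sum_congr rfl fun d _ => ?_
  rw [two_mul, Int.natCast_div]

theorem mult_A2hyp_diagonal {m : ℕ} (hm : m ∈ Finset.Icc 1 12) :
    mult K A2hyp ![m, m] = hypDiagonalMult.getD m 0 := by
  induction m using Nat.strong_induction_on with
  | _ m ih =>
    obtain ⟨hm1, hm12⟩ := Finset.mem_Icc.1 hm
    have hm12' : (m : ℤ) ≤ 12 := by exact_mod_cast hm12
    have hmem : ![(m : ℤ), m] ∈ Finset.Icc 0 ![12, 12] := by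
      simp [Pi.le_def, Fin.forall_fin_two, hm12']
    have hsum := (heightMultSum_diagonal (K := K) hm12' hm12').symm.trans
      ((denominatorCoeff_and_heightMultSum_A2hyp hmem).2.trans (hypHeightMultSum_diagonal m hm))
    rw [← Nat.cons_self_properDivisors (Nat.ne_of_gt hm1), Finset.sum_cons, Finset.sum_cons,
      Finset.sum_congr rfl fun d hd => by
        obtain ⟨hdvd, hlt⟩ := Nat.mem_properDivisors.1 hd
        have hd_pos := Nat.pos_of_dvd_of_pos hdvd hm1
        rw [ih d hlt (Finset.mem_Icc.2 ⟨hd_pos, hlt.le.trans hm12⟩)]] at hsum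
    exact mul_left_cancel₀ (by positivity) (add_right_cancel hsum)

end SerreAlgebra

section EnvelopingAlgebra

variable {R L : Type*} [CommRing R] [LieRing L] [LieAlgebra R L]

attribute [local instance] LieRing.ofAssociativeRing

local notation "U" => UniversalEnvelopingAlgebra R L
local notation "ι" => UniversalEnvelopingAlgebra.ι R

/-- The action of a Lie algebra on its enveloping algebra by left multiplication. -/
instance : LieRingModule L U where
  bracket x u := ι x * u
  add_lie x y u := by rw [map_add, add_mul]
  lie_add x u v := mul_add _ u v
  leibniz_lie x y u := by
    rw [LieHom.map_lie, LieRing.of_associative_ring_bracket, sub_mul, mul_assoc, mul_assoc,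
      sub_add_cancel]

theorem lie_universalEnvelopingAlgebra (x : L) (u : U) : ⁅x, u⁆ = ι x * u := rfl

instance : LieModule R L U where
  smul_lie r x u := by simp only [lie_universalEnvelopingAlgebra, map_smul, smul_mul_assoc]
  lie_smul r x u := mul_smul_comm r _ u

theorem submodule_universalEnvelopingAlgebra_eq_top {s : Set L}
    (hs : LieSubalgebra.lieSpan R L s = ⊤) {p : Submodule R U} (h1 : 1 ∈ p)
    (hp : ∀ x ∈ s, ∀ u ∈ p, ⁅x, u⁆ ∈ p) : p = ⊤ := by
  have hp' (x : L) : ∀ u ∈ p, ⁅x, u⁆ ∈ p :=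
    lie_mem_of_mem_lieSpan hp (hs ▸ LieSubalgebra.mem_top x)
  let P : Subalgebra R U :=
    { carrier := {v | ∀ u ∈ p, v * u ∈ p}
      add_mem' := fun ha hb u hu => by rw [add_mul]; exact p.add_mem (ha u hu) (hb u hu)
      mul_mem' := fun ha hb u hu => by rw [mul_assoc]; exact ha _ (hb u hu)
      algebraMap_mem' := fun r u hu => by rw [← Algebra.smul_def]; exact p.smul_mem r hu }
  let f : L →ₗ⁅R⁆ P :=
    { toFun := fun x => ⟨ι x, hp' x⟩
      map_add' := fun x y => Subtype.ext (map_add (ι) x y)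
      map_smul' := fun r x => Subtype.ext (map_smul (ι) r x)
      map_lie' := fun {x y} => Subtype.ext (LieHom.map_lie (ι) x y) }
  have hf : P.val.comp (UniversalEnvelopingAlgebra.lift R f) = AlgHom.id R U :=
    UniversalEnvelopingAlgebra.hom_ext R <| LieHom.ext fun x =>
      congrArg Subtype.val (UniversalEnvelopingAlgebra.lift_ι_apply R f x)
  refine eq_top_iff.2 fun u _ => ?_
  have hu := (UniversalEnvelopingAlgebra.lift R f u).2 1 h1
  rw [mul_one] at hu
  rwa [← AlgHom.id_apply (R := R) u, ← hf]

theorem end_universalEnvelopingAlgebra_eq_zero {s : Set L}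
    (hs : LieSubalgebra.lieSpan R L s = ⊤) {T : Module.End R U} (h1 : T 1 = 0)
    (hT : ∀ x ∈ s, ⁅x, T⁆ = 0) : T = 0 := by
  refine LinearMap.ker_eq_top.1 (submodule_universalEnvelopingAlgebra_eq_top hs h1 ?_)
  intro x hx u (hu : T u = 0)
  have h := LinearMap.congr_fun (hT x hx) u
  rwa [LieHom.lie_apply, hu, lie_zero, zero_sub, LinearMap.zero_apply, neg_eq_zero] at h

-- Acting on `(1, 0)` by the representation `x ↦ (u, v) ↦ (x u, x v - c x u)` on `U × U` traces the
-- graph of `T`.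
theorem exists_end_universalEnvelopingAlgebra (c : L →ₗ[R] Module.End R U)
    (hc : ∀ x y, c ⁅x, y⁆ = ⁅x, c y⁆ - ⁅y, c x⁆) :
    ∃ T : Module.End R U, T 1 = 0 ∧ ∀ x, ⁅x, T⁆ = c x := by
  let t : L →ₗ⁅R⁆ Module.End R (U × U) :=
    { toFun := fun x => (LieModule.toEnd R L U x).prodMap (LieModule.toEnd R L U x) -
        LinearMap.inr R U U ∘ₗ c x ∘ₗ LinearMap.fst R U U
      map_add' := fun x y => by
        refine LinearMap.ext fun p => Prod.ext (by simp) ?_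
        simpa using by abel
      map_smul' := fun r x => by
        ext <;> simp [smul_sub]
      map_lie' := fun {x y} => by
        refine LinearMap.ext fun p => Prod.ext ?_ ?_
        · simp [LieRing.of_associative_ring_bracket]
        · simp [LieRing.of_associative_ring_bracket, hc]
          abel }
  let Θ := UniversalEnvelopingAlgebra.lift R t
  let G : U →ₗ[R] U × U := LinearMap.applyₗ ((1 : U), (0 : U)) ∘ₗ Θ.toLinearMap
  have hG (x : L) (u : U) : G ⁅x, u⁆ = t x (G u) := by
    change Θ (ι x * u) (1, 0) = t x (Θ u (1, 0))
    rw [map_mul, UniversalEnvelopingAlgebra.lift_ι_apply]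
    rfl
  have hfst : LinearMap.eqLocus (LinearMap.fst R U U ∘ₗ G) LinearMap.id = ⊤ :=
    submodule_universalEnvelopingAlgebra_eq_top (s := Set.univ) (by simp) (by simp [G])
      fun x _ u (hu : (G u).1 = u) => show (G ⁅x, u⁆).1 = ⁅x, u⁆ by simp [hG, t, hu]
  refine ⟨LinearMap.snd R U U ∘ₗ G, by simp [G], fun x => LinearMap.ext fun u => ?_⟩
  have hu : (G u).1 = u := hfst.ge (Submodule.mem_top (x := u))
  simp [hG, t, hu]

theorem universalEnvelopingAlgebra_ι_injective {D : LieDerivation R L L}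
    (hD : Function.Injective D) :
    Function.Injective (UniversalEnvelopingAlgebra.ι R (L := L)) := by
  let t : L →ₗ⁅R⁆ Module.End R (L × R) :=
    { toFun := fun x => LinearMap.inl R L R ∘ₗ
        (LieAlgebra.ad R L x ∘ₗ LinearMap.fst R L R +
          LinearMap.toSpanSingleton R L (D x) ∘ₗ LinearMap.snd R L R)
      map_add' := fun x y => by ext <;> simp
      map_smul' := fun r x => by ext <;> simp
      map_lie' := fun {x y} => by
        ext <;> simp [LieRing.of_associative_ring_bracket, LieDerivation.apply_lie_eq_sub] }
  refine (injective_iff_map_eq_zero _).2 fun x hx => (injective_iff_map_eq_zero D).1 hD x ?_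
  have h : t x (0, 1) = 0 := by
    rw [← UniversalEnvelopingAlgebra.lift_ι_apply R t, hx, map_zero, LinearMap.zero_apply]
  simpa [t] using congrArg Prod.fst h

end EnvelopingAlgebra

section LowestWeight

variable {R L : Type*} [CommRing R] [LieRing L] [LieAlgebra R L]

open LieAlgebra

theorem lie_ad_pow_of_lie_eq_zero {x y : L} (hxy : ⁅x, y⁆ = 0) (n : ℕ) (z : L) :
    ⁅x, (ad R L y ^ n) z⁆ = (ad R L y ^ n) ⁅x, z⁆ := by
  induction n with
  | zero => rfl
  | succ n ih =>
    rw [pow_succ', Module.End.mul_apply, Module.End.mul_apply, ad_apply, ad_apply, leibniz_lie, hxy,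
      zero_lie, zero_add, ih]

theorem lie_ad_pow_of_lie_eq_smul {h f m : L} {a b : ℤ} (hf : ⁅h, f⁆ = a • f) (hm : ⁅h, m⁆ = b • m)
    (n : ℕ) : ⁅h, (ad R L f ^ n) m⁆ = (n * a + b) • (ad R L f ^ n) m := by
  induction n with
  | zero => simpa using hm
  | succ n ih =>
    rw [pow_succ', Module.End.mul_apply, ad_apply, leibniz_lie, hf, ih, smul_lie, lie_smul,
      ← add_smul]
    push_cast
    ring_nf

theorem lie_ad_pow_succ_of_primitive {h e f m : L} {μ : ℤ} (hef : ⁅e, f⁆ = h)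
    (hf : ⁅h, f⁆ = (-2 : ℤ) • f) (hem : ⁅e, m⁆ = 0) (hm : ⁅h, m⁆ = μ • m) (n : ℕ) :
    ⁅e, (ad R L f ^ (n + 1)) m⁆ = ((n + 1) * (μ - n)) • (ad R L f ^ n) m := by
  induction n with
  | zero => simp [leibniz_lie e, hef, hem, hm]
  | succ n ih =>
    rw [pow_succ', Module.End.mul_apply, ad_apply, leibniz_lie, hef, ih,
      lie_ad_pow_of_lie_eq_smul hf hm, lie_smul, ← ad_apply R, ← Module.End.mul_apply, ← pow_succ',
      ← add_smul]
    push_cast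
    ring_nf

variable {I : Type*} [DecidableEq I] {A : Matrix I I ℤ} {h e f : I → L}

theorem lie_ad_pow_eq_zero_of_chevalley (hA : IsGCM A)
    (hef : ∀ i j, ⁅e i, f j⁆ = if i = j then h i else 0)
    (hhf : ∀ i j, ⁅h i, f j⁆ = -A i j • f j) {i j : I} (hij : i ≠ j) (k : I) :
    ⁅e k, (ad R L (f i) ^ ((-A i j).toNat + 1)) (f j)⁆ = 0 := by
  have hn : ((-A i j).toNat : ℤ) = -A i j := Int.toNat_of_nonneg (neg_nonneg.2 (hA.2.1 i j hij))
  by_cases hki : k = i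
  · subst hki
    rw [lie_ad_pow_succ_of_primitive ((hef k k).trans (if_pos rfl)) (by rw [hhf, hA.1])
      ((hef k j).trans (if_neg hij)) (hhf k j), hn, sub_self, mul_zero, zero_smul]
  rw [lie_ad_pow_of_lie_eq_zero ((hef k i).trans (if_neg hki)), hef]
  split_ifs with hkj
  · rw [pow_succ, Module.End.mul_apply, ad_apply, ← lie_skew, hkj, hhf, neg_smul, neg_neg]
    rcases hm : (-A i j).toNat with _ | m
    · have hji : A j i = 0 := (hA.2.2 i j).1 (by omega)
      rw [hji, zero_smul, map_zero]
    · rw [pow_succ, Module.End.mul_apply, ad_apply, lie_smul, lie_self, smul_zero, map_zero]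
  · exact map_zero _

end LowestWeight

section ChevalleyRelations

open LieAlgebra

/-- The Chevalley–Serre relations for `A`, satisfied by elements `h i`, `e i`, `f i` of a Lie
algebra over `R`. -/
structure ChevalleyRelations (R : Type*) {I L : Type*} [CommRing R] [LieRing L] [LieAlgebra R L]
    [DecidableEq I] (A : Matrix I I ℤ) (h e f : I → L) : Prop where
  lie_h_h : ∀ i j, ⁅h i, h j⁆ = 0
  lie_e_f : ∀ i j, ⁅e i, f j⁆ = if i = j then h i else 0
  lie_h_e : ∀ i j, ⁅h i, e j⁆ = A i j • e j
  lie_h_f : ∀ i j, ⁅h i, f j⁆ = -A i j • f j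
  ad_e_pow_e : ∀ i j, i ≠ j → (ad R L (e i) ^ ((-A i j).toNat + 1)) (e j) = 0
  ad_f_pow_f : ∀ i j, i ≠ j → (ad R L (f i) ^ ((-A i j).toNat + 1)) (f j) = 0

variable {R I L : Type*} [CommRing R] [LieRing L] [LieAlgebra R L] {A : Matrix I I ℤ}
  {h e f : I → L}

theorem adE_eq_ad_pow (i j : I) : Relations.adE R A (i, j) =
    (ad R _ (FreeLieAlgebra.of R (Generators.E i)) ^ ((-A i j).toNat + 1))
      (FreeLieAlgebra.of R (Generators.E j)) := by
  rw [pow_succ]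
  rfl

theorem adF_eq_ad_pow (i j : I) : Relations.adF R A (i, j) =
    (ad R _ (FreeLieAlgebra.of R (Generators.F i)) ^ ((-A i j).toNat + 1))
      (FreeLieAlgebra.of R (Generators.F j)) := by
  rw [pow_succ]
  rfl

variable [DecidableEq I]

namespace ChevalleyRelations

theorem swap (H : ChevalleyRelations R A h e f) : ChevalleyRelations R A (-h) f e where
  lie_h_h i j := by rw [Pi.neg_apply, Pi.neg_apply, lie_neg, neg_lie, H.lie_h_h, neg_zero, neg_zero]
  lie_e_f i j := by
    rw [← lie_skew, H.lie_e_f]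
    split_ifs with hji hij hij
    exacts [hij ▸ rfl, (hij hji.symm).elim, (hji hij.symm).elim, neg_zero]
  lie_h_e i j := by rw [Pi.neg_apply, neg_lie, H.lie_h_f, neg_smul, neg_neg]
  lie_h_f i j := by rw [Pi.neg_apply, neg_lie, H.lie_h_e, neg_smul]
  ad_e_pow_e := H.ad_f_pow_f
  ad_f_pow_f := H.ad_e_pow_e

theorem ad_e_pow_succ_e (H : ChevalleyRelations R A h e f) (i j : I) :
    (ad R L (e i) ^ ((-A i j).toNat + 1)) (e j) = 0 := by
  rcases eq_or_ne i j with rfl | hij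
  · rw [pow_succ, Module.End.mul_apply, ad_apply, lie_self, map_zero]
  · exact H.ad_e_pow_e i j hij

/-- The homomorphism from the Kac–Moody algebra given by elements that satisfy the Chevalley–Serre
relations. -/
def lift (H : ChevalleyRelations R A h e f) : Matrix.ToLieAlgebra R A →ₗ⁅R⁆ L :=
  lieQuotientLift _ (FreeLieAlgebra.lift R (Generators.rec h e f)) <| by
    refine LieSubmodule.lieSpan_le.2 ?_
    rintro _ (((((⟨⟨i, j⟩, rfl⟩ | ⟨⟨i, j⟩, rfl⟩) | ⟨⟨i, j⟩, rfl⟩) | ⟨⟨i, j⟩, rfl⟩) |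
      ⟨⟨i, j⟩, rfl⟩) | ⟨⟨i, j⟩, rfl⟩) <;> rw [SetLike.mem_coe, LieHom.mem_ker]
    · simp [Relations.HH, H.lie_h_h]
    · by_cases hij : i = j
      · simp [Relations.EF, H.lie_e_f, hij]
      · simp [Relations.EF, H.lie_e_f, hij]
    · simp [Relations.HE, H.lie_h_e]
    · simp [Relations.HF, H.lie_h_f]
    · rw [adE_eq_ad_pow, lieHom_ad_pow, FreeLieAlgebra.lift_of_apply, FreeLieAlgebra.lift_of_apply,
        H.ad_e_pow_succ_e]
    · rw [adF_eq_ad_pow, lieHom_ad_pow, FreeLieAlgebra.lift_of_apply, FreeLieAlgebra.lift_of_apply,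
        H.swap.ad_e_pow_succ_e]

theorem lift_gE {L : Type*} [LieRing L] [LieAlgebra ℚ L] {h e f : I → L}
    (H : ChevalleyRelations ℚ A h e f) (i : I) : H.lift (gE A i) = e i :=
  (lieQuotientLift_mk _ _ _ _).trans (FreeLieAlgebra.lift_of_apply _ _)

end ChevalleyRelations

variable (A) in
theorem chevalleyRelations_gH_gE_gF : ChevalleyRelations ℚ A (gH A) (gE A) (gF A) := by
  let π : FreeLieAlgebra ℚ (Generators I) →ₗ⁅ℚ⁆ Matrix.ToLieAlgebra ℚ A :=
    lieQuotientMk (Relations.toIdeal ℚ A)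
  have hπ {x} (hx : x ∈ Relations.toSet ℚ A) : π x = 0 :=
    lieQuotientMk_eq_zero (LieSubmodule.subset_lieSpan hx)
  have hH (i : I) : π (FreeLieAlgebra.of ℚ (Generators.H i)) = gH A i := rfl
  have hE (i : I) : π (FreeLieAlgebra.of ℚ (Generators.E i)) = gE A i := rfl
  have hF (i : I) : π (FreeLieAlgebra.of ℚ (Generators.F i)) = gF A i := rfl
  refine ⟨fun i j => ?_, fun i j => ?_, fun i j => ?_, fun i j => ?_, fun i j _ => ?_,
    fun i j _ => ?_⟩
  · simpa [Relations.HH, hH] using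
      hπ (x := Relations.HH ℚ (i, j)) (by simp [Relations.toSet])
  · have hEF := hπ (x := Relations.EF ℚ (i, j)) (by simp [Relations.toSet])
    by_cases hij : i = j
    · subst hij
      simpa [Relations.EF, hH, hE, hF, sub_eq_zero] using hEF
    · simpa [Relations.EF, hE, hF, hij] using hEF
  · simpa [Relations.HE, hH, hE, sub_eq_zero] using
      hπ (x := Relations.HE ℚ A (i, j)) (by simp [Relations.toSet])
  · simpa [Relations.HF, hH, hF, add_eq_zero_iff_eq_neg] using
      hπ (x := Relations.HF ℚ A (i, j)) (by simp [Relations.toSet])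
  · rw [← hE, ← hE, ← lieHom_ad_pow, ← adE_eq_ad_pow]
    exact hπ (by simp [Relations.toSet])
  · rw [← hF, ← hF, ← lieHom_ad_pow, ← adF_eq_ad_pow]
    exact hπ (by simp [Relations.toSet])

variable (A) in
theorem lieSpan_range_gH_gE_gF : LieSubalgebra.lieSpan ℚ (Matrix.ToLieAlgebra ℚ A)
    (Set.range (gH A) ∪ Set.range (gE A) ∪ Set.range (gF A)) = ⊤ := by
  refine (congrArg _ (Set.ext fun x => ?_)).trans
    (lieSpan_range_of_surjective (lieQuotientMk_surjective (Relations.toIdeal ℚ A)))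
  constructor
  · rintro ((⟨i, rfl⟩ | ⟨i, rfl⟩) | ⟨i, rfl⟩)
    exacts [⟨.H i, rfl⟩, ⟨.E i, rfl⟩, ⟨.F i, rfl⟩]
  · rintro ⟨i | i | i, rfl⟩
    exacts [.inl (.inl ⟨i, rfl⟩), .inl (.inr ⟨i, rfl⟩), .inr ⟨i, rfl⟩]

end ChevalleyRelations

namespace SerreAlgebra

/-- The values of the `i`-th simple coroot on the simple roots. -/
def simpleCoroot (R : Type*) [CommRing R] {I : Type*} (A : Matrix I I ℤ) (i : I) : I → R :=
  fun j => A i j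

section Verma

open LieAlgebra LieModule

variable {R : Type*} [CommRing R] {I : Type*} {A : Matrix I I ℤ}

attribute [local instance] LieRing.ofAssociativeRing

local notation "U" => UniversalEnvelopingAlgebra R (SerreAlgebra R A)
local notation "ρ" => LieModule.toEnd R (SerreAlgebra R A) U

theorem lie_smul_end {M : Type*} [AddCommGroup M] [Module R M] (r : R) (S T : Module.End R M) :
    ⁅S, r • T⁆ = r • ⁅S, T⁆ :=
  lie_smul r S T

theorem lie_eq_lie_toEnd (x : SerreAlgebra R A) (T : Module.End R U) : ⁅x, T⁆ = ⁅ρ x, T⁆ :=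
  rfl

theorem end_eq_zero {T : Module.End R U} (h1 : T 1 = 0) (hT : ∀ k, ⁅ρ (e R A k), T⁆ = 0) : T = 0 :=
  end_universalEnvelopingAlgebra_eq_zero (lieSpan_range_e R A) h1 <| by
    rintro _ ⟨k, rfl⟩
    exact hT k

theorem exists_cartanEnd (a : I → R) :
    ∃ T : Module.End R U, T 1 = 0 ∧ ∀ x, ⁅ρ x, T⁆ = -ρ (diagDer a x) := by
  let c : SerreAlgebra R A →ₗ[R] Module.End R U :=
    { toFun := fun x => -ρ (diagDer a x)
      map_add' := fun x y => by rw [map_add, map_add, neg_add]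
      map_smul' := fun r x => by rw [map_smul, map_smul, smul_neg]; rfl }
  refine exists_end_universalEnvelopingAlgebra c fun x y => ?_
  change -ρ (diagDer a ⁅x, y⁆) = ⁅ρ x, -ρ (diagDer a y)⁆ - ⁅ρ y, -ρ (diagDer a x)⁆
  rw [lie_neg, lie_neg, ← LieHom.map_lie, ← LieHom.map_lie, LieDerivation.apply_lie_eq_sub, map_sub]
  abel

variable (A) in
/-- The operator on the Verma module `U` by which the Cartan element with values `a` on the simple
roots acts. -/
def cartanEnd (a : I → R) : Module.End R U :=
  (exists_cartanEnd a).choose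

theorem cartanEnd_one (a : I → R) : cartanEnd A a 1 = 0 :=
  (exists_cartanEnd a).choose_spec.1

theorem lie_toEnd_cartanEnd (a : I → R) (x : SerreAlgebra R A) :
    ⁅ρ x, cartanEnd A a⁆ = -ρ (diagDer a x) :=
  (exists_cartanEnd a).choose_spec.2 x

theorem lie_cartanEnd_toEnd (a : I → R) (x : SerreAlgebra R A) :
    ⁅cartanEnd A a, ρ x⁆ = ρ (diagDer a x) := by
  rw [← lie_skew, lie_toEnd_cartanEnd, neg_neg]

theorem lie_end_one {S T : Module.End R U} (hS : S 1 = 0) (hT : T 1 = 0) : ⁅S, T⁆ 1 = 0 := by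
  rw [LieRing.of_associative_ring_bracket]
  simp [hS, hT]

theorem lie_cartanEnd_cartanEnd (a b : I → R) : ⁅cartanEnd A a, cartanEnd A b⁆ = 0 := by
  refine end_eq_zero (lie_end_one (cartanEnd_one a) (cartanEnd_one b)) fun k => ?_
  rw [leibniz_lie, lie_toEnd_cartanEnd, lie_toEnd_cartanEnd, neg_lie, lie_neg, lie_toEnd_cartanEnd,
    neg_neg, lie_cartanEnd_toEnd, diagDer_comm, add_neg_cancel]

theorem lie_toEnd_ad_pow_sub (hA : IsGCM A) (k j : I) (n : ℕ) :
    ⁅ρ (e R A k), (n * (n - 1 + A k j) : R) • ρ ((ad R _ (e R A k) ^ (n - 1)) (e R A j))⁆ -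
      ⁅ρ ((ad R _ (e R A k) ^ n) (e R A j)), cartanEnd A (simpleCoroot R A k)⁆ =
    ((n + 1 : ℕ) * ((n + 1 : ℕ) - 1 + A k j) : R) • ρ ((ad R _ (e R A k) ^ n) (e R A j)) := by
  have h : (n * (n - 1 + A k j) : R) • ⁅e R A k, (ad R _ (e R A k) ^ (n - 1)) (e R A j)⁆ =
      (n * (n - 1 + A k j) : R) • (ad R _ (e R A k) ^ n) (e R A j) := by
    cases n with
    | zero => simp
    | succ n => rw [Nat.add_sub_cancel, ← ad_apply R, ← Module.End.mul_apply, ← pow_succ']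
  rw [lie_smul_end, ← LieHom.map_lie, ← map_smul, h, lie_toEnd_cartanEnd, diagDer_ad_pow,
    sub_neg_eq_add, ← map_add, ← add_smul, map_smul]
  simp only [simpleCoroot, hA.1]
  push_cast
  ring_nf

theorem ad_pow_cartanEnd (hA : IsGCM A) {i k : I} (hki : k ≠ i) :
    (ad R _ (ρ (e R A k)) ^ ((-A k i).toNat + 1)) (cartanEnd A (simpleCoroot R A i)) = 0 := by
  rw [pow_succ, Module.End.mul_apply, ad_apply, lie_toEnd_cartanEnd, diagDer_e, simpleCoroot]
  rcases hm : (-A k i).toNat with _ | m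
  · have hik : A i k = 0 := (hA.2.2 k i).1 (by have := hA.2.1 k i hki; omega)
    rw [hik, Int.cast_zero, zero_smul, map_zero, neg_zero, map_zero]
  · rw [pow_succ, Module.End.mul_apply, ad_apply, lie_neg, ← LieHom.map_lie, lie_smul,
      lie_self, smul_zero, map_zero, neg_zero, map_zero]

variable [DecidableEq I]

theorem exists_loweringEnd (hA : IsGCM A) (i : I) : ∃ T : Module.End R U, T 1 = 0 ∧
    ∀ k, ⁅ρ (e R A k), T⁆ = if k = i then cartanEnd A (simpleCoroot R A i) else 0 := by
  set H := cartanEnd A (simpleCoroot R A i)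
  suffices h : ∃ δ : SerreAlgebra R A →ₗ[R] Module.End R U,
      (∀ k, δ (e R A k) = if k = i then H else 0) ∧ ∀ x y, δ ⁅x, y⁆ = ⁅x, δ y⁆ - ⁅y, δ x⁆ + 0 by
    obtain ⟨δ, hδ_e, hδ_lie⟩ := h
    obtain ⟨T, hT_one, hT⟩ := exists_end_universalEnvelopingAlgebra δ
      fun x y => (hδ_lie x y).trans (add_zero _)
    exact ⟨T, hT_one, fun k => (hT _).trans (hδ_e k)⟩
  refine exists_twistedDerivation 0 _ fun k j hkj => ?_
  simp only [lie_eq_lie_toEnd]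
  by_cases hki : k = i
  · subst hki
    refine ⟨fun n => (n * (n - 1 + A k j) : R) • ρ ((ad R _ (e R A k) ^ (n - 1)) (e R A j)),
      ?_, fun n => ?_, ?_⟩
    · simp [hkj.symm]
    · rw [if_pos rfl]
      exact (lie_toEnd_ad_pow_sub hA k j n).symm.trans (congrArg (· - _) (zero_add _).symm)
    · have h : (((-A k j).toNat : ℤ) : R) = ((-A k j : ℤ) : R) :=
        congrArg _ (Int.toNat_of_nonneg (neg_nonneg.2 (hA.2.1 k j hkj)))
      push_cast at h
      simp [h]
  · simp only [if_neg hki]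
    by_cases hji : j = i
    · subst hji
      refine ⟨fun n => (ad R _ (ρ (e R A k)) ^ n) H, ?_, ?_, ?_⟩
      · simp
      · intro n
        simp [pow_succ']
      · exact ad_pow_cartanEnd hA hki
    · exact ⟨0, by simp [hji], by simp, rfl⟩

variable (R) in
/-- The operator on the Verma module `U` by which the Chevalley generator `f i` acts. -/
def loweringEnd (hA : IsGCM A) (i : I) : Module.End R U :=
  (exists_loweringEnd hA i).choose

theorem loweringEnd_one (hA : IsGCM A) (i : I) : loweringEnd R hA i 1 = 0 :=
  (exists_loweringEnd hA i).choose_spec.1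

theorem lie_toEnd_loweringEnd (hA : IsGCM A) (k i : I) : ⁅ρ (e R A k), loweringEnd R hA i⁆ =
    if k = i then cartanEnd A (simpleCoroot R A i) else 0 :=
  (exists_loweringEnd hA i).choose_spec.2 k

theorem lie_cartanEnd_loweringEnd (hA : IsGCM A) (a : I → R) (j : I) :
    ⁅cartanEnd A a, loweringEnd R hA j⁆ = -a j • loweringEnd R hA j := by
  rw [← sub_eq_zero]
  refine end_eq_zero ?_ fun k => ?_
  · rw [LinearMap.sub_apply, LinearMap.smul_apply, loweringEnd_one, smul_zero, sub_zero,
      lie_end_one (cartanEnd_one a) (loweringEnd_one hA j)]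
  · rw [lie_sub, leibniz_lie, lie_toEnd_cartanEnd, diagDer_e, neg_lie, lie_smul_end,
      ← lie_eq_lie_toEnd, smul_lie, lie_eq_lie_toEnd, lie_toEnd_loweringEnd]
    split_ifs with hkj
    · rw [lie_cartanEnd_cartanEnd, hkj]
      simp
    · simp

theorem chevalleyRelations_verma (hA : IsGCM A) :
    ChevalleyRelations R A (fun i => cartanEnd A (simpleCoroot R A i)) (fun i => ρ (e R A i))
      (loweringEnd R hA) := by
  have hef (i j : I) : ⁅ρ (e R A i), loweringEnd R hA j⁆ =
      if i = j then cartanEnd A (simpleCoroot R A i) else 0 := by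
    rw [lie_toEnd_loweringEnd]
    split_ifs with hij
    exacts [hij ▸ rfl, rfl]
  have hhf (i j : I) : ⁅cartanEnd A (simpleCoroot R A i), loweringEnd R hA j⁆ =
      -A i j • loweringEnd R hA j := by
    rw [lie_cartanEnd_loweringEnd, neg_smul, neg_smul, simpleCoroot, Int.cast_smul_eq_zsmul]
  refine ⟨fun i j => lie_cartanEnd_cartanEnd _ _, hef, fun i j => ?_, hhf, fun i j hij => ?_,
    fun i j hij => ?_⟩
  · rw [lie_cartanEnd_toEnd, diagDer_e, map_smul, simpleCoroot, Int.cast_smul_eq_zsmul]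
  · rw [← lieHom_ad_pow, ad_e_pow_e R A hij, map_zero]
  · refine end_eq_zero ?_ (lie_ad_pow_eq_zero_of_chevalley hA hef hhf hij)
    generalize (-A i j).toNat + 1 = n
    induction n with
    | zero => exact loweringEnd_one hA j
    | succ n ih =>
      rw [pow_succ', Module.End.mul_apply, ad_apply]
      exact lie_end_one (loweringEnd_one hA i) ih

end Verma

variable {K : Type*} [Field K] [CharZero K] {I : Type*} [Finite I] {A : Matrix I I ℤ}

theorem diagDer_one_injective : Function.Injective (diagDer (A := A) (1 : I → K)) := by
  classical
  have := Fintype.ofFinite I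
  refine (injective_iff_map_eq_zero _).2 fun x hx => (weightBasis K A).repr.map_eq_zero_iff.1 ?_
  ext j
  have hj : 0 < ∑ i, j.1 i := Finset.sum_pos' (fun i _ => (weight_pos j).le i) <| by
    simpa using (Pi.lt_def.1 (weight_pos j)).2
  have hj' : ∑ i, (1 : I → K) i * j.1 i ≠ 0 := by
    simp only [Pi.one_apply, one_mul]
    exact_mod_cast hj.ne'
  have h : (weightBasis K A).repr (diagDer 1 x) j = _ :=
    repr_apply_of_forall_apply_eq_smul (f := (diagDer (A := A) (1 : I → K) : Module.End K _)) _
      (diagDer_weightBasis 1) x j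
  rw [hx, map_zero, Finsupp.zero_apply, zero_eq_mul] at h
  exact h.resolve_left hj'

theorem ι_injective :
    Function.Injective (UniversalEnvelopingAlgebra.ι K (L := SerreAlgebra K A)) :=
  universalEnvelopingAlgebra_ι_injective diagDer_one_injective

end SerreAlgebra

namespace ChevalleyRelations

open SerreAlgebra

variable {I : Type*} [DecidableEq I] {A : Matrix I I ℤ}

section

variable {R L : Type*} [CommRing R] [LieRing L] [LieAlgebra R L] {h e f : I → L}

/-- The homomorphism from the Serre algebra given by the `e i`. -/
def positive (H : ChevalleyRelations R A h e f) : SerreAlgebra R A →ₗ⁅R⁆ L :=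
  SerreAlgebra.lift e H.ad_e_pow_e

theorem positive_e (H : ChevalleyRelations R A h e f) (i : I) :
    H.positive (SerreAlgebra.e R A i) = e i :=
  SerreAlgebra.lift_e _ _ i

end

attribute [local instance] LieRing.ofAssociativeRing

theorem positive_injective [Finite I] (hA : IsGCM A) :
    Function.Injective (chevalleyRelations_gH_gE_gF A).positive := by
  have h : (chevalleyRelations_verma (R := ℚ) hA).lift.comp
      (chevalleyRelations_gH_gE_gF A).positive =
      LieModule.toEnd ℚ (SerreAlgebra ℚ A) (UniversalEnvelopingAlgebra ℚ (SerreAlgebra ℚ A)) :=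
    SerreAlgebra.hom_ext fun i => by rw [LieHom.comp_apply, positive_e, lift_gE]
  refine fun x y hxy => ι_injective ?_
  have hxy' := congrArg (fun z => (chevalleyRelations_verma (R := ℚ) hA).lift z 1) hxy
  simp only [← LieHom.comp_apply, h] at hxy'
  simpa [lie_universalEnvelopingAlgebra] using hxy'

end ChevalleyRelations

theorem span_range_neg {R M ι : Type*} [Ring R] [AddCommGroup M] [Module R M] (v : ι → M) :
    Submodule.span R (Set.range (-v)) = Submodule.span R (Set.range v) := by
  rw [← Submodule.span_neg (Set.range v), ← Set.image_neg_eq_neg, ← Set.range_comp]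
  rfl

namespace ChevalleyRelations

open SerreAlgebra

variable {I : Type*} [DecidableEq I] {A : Matrix I I ℤ}

section

variable {R L : Type*} [CommRing R] [LieRing L] [LieAlgebra R L] {h e f : I → L}

theorem lie_h_positive (H : ChevalleyRelations R A h e f) (i : I) (x : SerreAlgebra R A) :
    ⁅h i, H.positive x⁆ = H.positive (diagDer (simpleCoroot R A i) x) := by
  have hx : x ∈ LieSubalgebra.lieSpan R (SerreAlgebra R A) (Set.range (SerreAlgebra.e R A)) :=
    lieSpan_range_e R A ▸ LieSubalgebra.mem_top x
  induction hx using LieSubalgebra.lieSpan_induction with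
  | mem x hx =>
    obtain ⟨j, rfl⟩ := hx
    rw [diagDer_e, map_smul, positive_e, H.lie_h_e, simpleCoroot, Int.cast_smul_eq_zsmul]
  | zero => simp
  | add x y _ _ hx hy => rw [map_add, lie_add, hx, hy, map_add, map_add]
  | smul r x _ hx => rw [map_smul, lie_smul, hx, map_smul, map_smul]
  | lie x y _ _ hx hy =>
    rw [LieHom.map_lie, leibniz_lie, hx, hy, LieDerivation.apply_lie_eq_add, map_add,
      LieHom.map_lie, LieHom.map_lie, add_comm]

theorem lie_e_positive (H : ChevalleyRelations R A h e f) (i : I) (x : SerreAlgebra R A) :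
    ⁅e i, H.positive x⁆ = H.positive ⁅SerreAlgebra.e R A i, x⁆ := by
  rw [LieHom.map_lie, positive_e]

theorem lie_e_mem_range_positive (H : ChevalleyRelations R A h e f) (i : I) {z : L}
    (hz : z ∈ Submodule.span R (Set.range h)) : ⁅e i, z⁆ ∈ H.positive.range := by
  induction hz using Submodule.span_induction with
  | mem z hz =>
    obtain ⟨j, rfl⟩ := hz
    rw [← lie_skew, H.lie_h_e, ← H.positive_e]
    exact neg_mem (zsmul_mem (LieHom.mem_range_self _ _) _)
  | zero => rw [lie_zero]; exact zero_mem _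
  | add y z _ _ hy hz => rw [lie_add]; exact add_mem hy hz
  | smul r z _ hz => rw [lie_smul]; exact H.positive.range.smul_mem r hz

theorem lie_f_positive_mem (H : ChevalleyRelations R A h e f) (i : I) (x : SerreAlgebra R A) :
    ⁅f i, H.positive x⁆ ∈ Submodule.span R (Set.range h) ⊔ H.positive.range.toSubmodule := by
  set Q := Submodule.span R (Set.range h) ⊔ H.positive.range.toSubmodule
  let P := Q.comap (LieAlgebra.ad R L (f i) ∘ₗ (H.positive : SerreAlgebra R A →ₗ[R] L))
  suffices hP : P = ⊤ from (hP ▸ Submodule.mem_top : x ∈ P)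
  refine submodule_eq_top_of_lie_mem (lieSpan_range_e R A) ?_ ?_
  · rintro _ ⟨j, rfl⟩
    change ⁅f i, H.positive (SerreAlgebra.e R A j)⁆ ∈ Q
    rw [positive_e, H.swap.lie_e_f]
    split_ifs
    · exact Submodule.mem_sup_left (neg_mem (Submodule.subset_span ⟨i, rfl⟩))
    · exact zero_mem _
  · rintro _ ⟨j, rfl⟩ y (hy : ⁅f i, H.positive y⁆ ∈ Q)
    change ⁅f i, H.positive ⁅SerreAlgebra.e R A j, y⁆⁆ ∈ Q
    refine Submodule.mem_sup_right ?_
    rw [LieHom.map_lie, leibniz_lie, positive_e, H.swap.lie_e_f]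
    refine add_mem ?_ ?_
    · split_ifs
      · rw [Pi.neg_apply, neg_lie, lie_h_positive]
        exact neg_mem (LieHom.mem_range_self _ _)
      · rw [zero_lie]
        exact zero_mem _
    · obtain ⟨z, hz, _, ⟨w, rfl⟩, hzw⟩ := Submodule.mem_sup.1 hy
      rw [← hzw, lie_add]
      exact add_mem (H.lie_e_mem_range_positive j hz) ⟨_, (H.lie_e_positive j w).symm⟩

/-- The sum of the Cartan subalgebra and of the subalgebras generated by the `e i` and by the
`f i`. -/
def triangularSum (H : ChevalleyRelations R A h e f) : Submodule R L :=
  Submodule.span R (Set.range h) ⊔ H.positive.range.toSubmodule ⊔ H.swap.positive.range.toSubmodule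

theorem triangularSum_swap (H : ChevalleyRelations R A h e f) :
    H.swap.triangularSum = H.triangularSum := by
  rw [triangularSum, triangularSum, span_range_neg, sup_right_comm]
  rfl

theorem lie_e_mem_triangularSum (H : ChevalleyRelations R A h e f) (i : I) {z : L}
    (hz : z ∈ H.triangularSum) : ⁅e i, z⁆ ∈ H.triangularSum := by
  obtain ⟨y, hy, _, ⟨w, rfl⟩, rfl⟩ := Submodule.mem_sup.1 hz
  obtain ⟨c, hc, _, ⟨v, rfl⟩, rfl⟩ := Submodule.mem_sup.1 hy
  rw [lie_add, lie_add]
  refine add_mem (Submodule.mem_sup_left (Submodule.mem_sup_right (add_mem ?_ ?_))) ?_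
  · exact H.lie_e_mem_range_positive i hc
  · exact ⟨_, (H.lie_e_positive i v).symm⟩
  · have h := H.swap.lie_f_positive_mem i w
    rw [span_range_neg] at h
    exact (sup_le_sup_right le_sup_left _ : _ ≤ H.triangularSum) h

theorem lie_f_mem_triangularSum (H : ChevalleyRelations R A h e f) (i : I) {z : L}
    (hz : z ∈ H.triangularSum) : ⁅f i, z⁆ ∈ H.triangularSum := by
  rw [← triangularSum_swap] at hz ⊢
  exact H.swap.lie_e_mem_triangularSum i hz

theorem triangularSum_eq_top (H : ChevalleyRelations R A h e f)
    (hL : LieSubalgebra.lieSpan R L (Set.range h ∪ Set.range e ∪ Set.range f) = ⊤) :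
    H.triangularSum = ⊤ := by
  refine submodule_eq_top_of_lie_mem hL ?_ ?_
  · rintro _ ((⟨i, rfl⟩ | ⟨i, rfl⟩) | ⟨i, rfl⟩)
    · exact Submodule.mem_sup_left (Submodule.mem_sup_left (Submodule.subset_span ⟨i, rfl⟩))
    · exact Submodule.mem_sup_left (Submodule.mem_sup_right ⟨_, H.positive_e i⟩)
    · exact Submodule.mem_sup_right ⟨_, H.swap.positive_e i⟩
  · rintro _ ((⟨i, rfl⟩ | ⟨i, rfl⟩) | ⟨i, rfl⟩) z hz
    · rw [← if_pos (rfl : i = i) (t := h i) (e := 0), ← H.lie_e_f, lie_lie]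
      exact sub_mem (H.lie_e_mem_triangularSum i (H.lie_f_mem_triangularSum i hz))
        (H.lie_f_mem_triangularSum i (H.lie_e_mem_triangularSum i hz))
    · exact H.lie_e_mem_triangularSum i hz
    · exact H.lie_f_mem_triangularSum i hz

end

section

variable {K L : Type*} [Field K] [LieRing L] [LieAlgebra K L] {h e f : I → L}

/-- The elements of weight `β` in the sum of the Cartan subalgebra and of the subalgebras generated
by the `e i` and by the `f i`. -/
def weightComponent (H : ChevalleyRelations K A h e f) (β : I → ℤ) : Submodule K L :=
  (⨆ _ : β = 0, Submodule.span K (Set.range h)) ⊔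
    (weightSpace K A β).map (H.positive : SerreAlgebra K A →ₗ[K] L) ⊔
    (weightSpace K A (-β)).map (H.swap.positive : SerreAlgebra K A →ₗ[K] L)

theorem iSup_weightComponent (H : ChevalleyRelations K A h e f) :
    ⨆ β, H.weightComponent β = H.triangularSum := by
  have h_neg : ⨆ β, weightSpace K A (-β) = ⊤ :=
    ((Equiv.neg _).iSup_comp (g := weightSpace K A)).trans iSup_weightSpace
  simp only [weightComponent, iSup_sup_eq, iSup_iSup_eq_left, ← Submodule.map_iSup, h_neg,
    iSup_weightSpace, Submodule.map_top]
  rfl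

theorem commute_ad_h (H : ChevalleyRelations K A h e f) (i j : I) :
    Commute (LieAlgebra.ad K L (h i)) (LieAlgebra.ad K L (h j)) :=
  LinearMap.ext fun x => by simp [leibniz_lie (h i), H.lie_h_h]

theorem weightComponent_of_pos [CharZero K] (H : ChevalleyRelations K A h e f) {β : I → ℤ}
    (hβ : 0 < β) : H.weightComponent β =
      (weightSpace K A β).map (H.positive : SerreAlgebra K A →ₗ[K] L) := by
  have h_neg : weightSpace K A (-β) = ⊥ :=
    not_not.1 <| mt pos_of_weightSpace_ne_bot (neg_neg_of_pos hβ).not_gt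
  simp [weightComponent, hβ.ne', h_neg]

variable [Fintype I]

theorem lie_h_positive_of_mem_weightSpace (H : ChevalleyRelations K A h e f) {β : I → ℤ}
    {x : SerreAlgebra K A} (hx : x ∈ weightSpace K A β) (i : I) :
    ⁅h i, H.positive x⁆ = ((∑ j, A i j * β j : ℤ) : K) • H.positive x := by
  rw [lie_h_positive, ← map_smul, diagDer_apply_eq_sum, Int.cast_sum, Finset.sum_smul]
  refine congrArg _ (Finset.sum_congr rfl fun j _ => ?_)
  rw [mem_weightSpace.1 hx, smul_smul, Int.cast_mul, simpleCoroot]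

theorem weightComponent_le_eigenspace (H : ChevalleyRelations K A h e f) (β : I → ℤ) (i : I) :
    H.weightComponent β ≤
      (LieAlgebra.ad K L (h i)).eigenspace ((∑ j, A i j * β j : ℤ) : K) := by
  refine sup_le (sup_le (iSup_le fun hβ => Submodule.span_le.2 ?_) ?_) ?_
  · rintro _ ⟨j, rfl⟩
    simp [hβ, H.lie_h_h]
  · rintro _ ⟨x, hx, rfl⟩
    exact Module.End.mem_eigenspace_iff.2 (H.lie_h_positive_of_mem_weightSpace hx i)
  · rintro _ ⟨x, hx, rfl⟩
    have h := H.swap.lie_h_positive_of_mem_weightSpace hx i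
    refine Module.End.mem_eigenspace_iff.2 (neg_injective ?_)
    rw [← neg_smul, ← Int.cast_neg, ← Finset.sum_neg_distrib]
    simpa using h

variable [CharZero K]

theorem iInf_eigenspace_ad_eq_weightComponent (H : ChevalleyRelations K A h e f)
    (hL : LieSubalgebra.lieSpan K L (Set.range h ∪ Set.range e ∪ Set.range f) = ⊤)
    (hA : A.det ≠ 0) (β : I → ℤ) :
    ⨅ i, (LieAlgebra.ad K L (h i)).eigenspace ((∑ j, A i j * β j : ℤ) : K) =
      H.weightComponent β := by
  have h_inj : Function.Injective fun (γ : I → ℤ) i => ((∑ j, A i j * γ j : ℤ) : K) :=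
    (intCast_comp_injective K I).comp <| (injective_iff_map_eq_zero A.mulVecLin).2 fun _ =>
      Matrix.eq_zero_of_mulVec_eq_zero hA
  rw [iInf_eigenspace_eq_iSup H.commute_ad_h
    (H.iSup_weightComponent.trans (H.triangularSum_eq_top hL)) H.weightComponent_le_eigenspace]
  simp only [h_inj.eq_iff, iSup_iSup_eq_left]

end

end ChevalleyRelations

theorem rootMult_eq_mult {I : Type*} [Fintype I] [DecidableEq I] {A : Matrix I I ℤ} (hA : IsGCM A)
    (hdet : A.det ≠ 0) {β : I → ℤ} (hβ : 0 < β) : rootMult A β = SerreAlgebra.mult ℚ A β := by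
  have H := chevalleyRelations_gH_gE_gF A
  rw [rootMult, rootSpace, H.iInf_eigenspace_ad_eq_weightComponent (lieSpan_range_gH_gE_gF A) hdet,
    H.weightComponent_of_pos hβ]
  exact (Submodule.equivMapOfInjective _
    (ChevalleyRelations.positive_injective hA) _).finrank_eq.symm

theorem det_A2hyp_ne_zero : A2hyp.det ≠ 0 := by
  decide +kernel

theorem rootMult_A2hyp_diagonal {m : ℕ} (hm : m ∈ Finset.Icc 1 12) :
    rootMult A2hyp ![m, m] = SerreAlgebra.hypDiagonalMult.getD m 0 := by
  have hm0 : 0 < m := (Finset.mem_Icc.1 hm).1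
  have hpos : 0 < ![(m : ℤ), m] := by
    simp [Pi.lt_def, Pi.le_def, Fin.forall_fin_two, hm0]
  rw [rootMult_eq_mult isGCM_A2hyp det_A2hyp_ne_zero hpos, SerreAlgebra.mult_A2hyp_diagonal hm]

/-- **Diagonal root multiplicities in the simplest rank-2 hyperbolic Kac–Moody algebra.** -/
theorem rank2_diagonal_mults :
    rootMult A2hyp ![1, 1] = 1 ∧
    rootMult A2hyp ![2, 2] = 1 ∧
    rootMult A2hyp ![3, 3] = 3 ∧
    rootMult A2hyp ![4, 4] = 6 ∧
    rootMult A2hyp ![5, 5] = 16 ∧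
    rootMult A2hyp ![6, 6] = 39 ∧
    rootMult A2hyp ![7, 7] = 107 ∧
    rootMult A2hyp ![8, 8] = 288 ∧
    rootMult A2hyp ![9, 9] = 808 ∧
    rootMult A2hyp ![10, 10] = 2278 ∧
    rootMult A2hyp ![11, 11] = 6559 ∧
    rootMult A2hyp ![12, 12] = 19022 := by
  have h (m v : ℕ) (hm : m ∈ Finset.Icc 1 12) (hv : SerreAlgebra.hypDiagonalMult.getD m 0 = v) :
      rootMult A2hyp ![m, m] = v :=
    Nat.cast_injective ((rootMult_A2hyp_diagonal hm).trans hv)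
  exact ⟨h 1 1 (by decide) rfl, h 2 1 (by decide) rfl, h 3 3 (by decide) rfl,
    h 4 6 (by decide) rfl, h 5 16 (by decide) rfl, h 6 39 (by decide) rfl,
    h 7 107 (by decide) rfl, h 8 288 (by decide) rfl, h 9 808 (by decide) rfl,
    h 10 2278 (by decide) rfl, h 11 6559 (by decide) rfl, h 12 19022 (by decide) rfl⟩
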